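/- arXiv:2410.23899 — 3 statements merged into one kernel-verified Lean document; each statement's English description precedes it below -/
import Mathlib

section
/- (Lemma 4.3, modulus of continuity for several interlacing curves.) Fix p, ε, η, M^bot, M^side, A^sep, A^gap ∈ (0,∞), Δ^gap ∈ (0,1/2), k ∈ ℕ, and σ = √(p(1+p)). There exist N6 ∈ ℕ and δ > 0, depending on these parameters, such that the following holds for all integers n ≥ N6. Assume: x⃗, y⃗ ∈ 𝔚_k with |x_i| ≤ M^side·n^{1/2} and |y_i − p·n| ≤ M^side·n^{1/2} for i ∈ ⟦1,k⟧; x_i − x_{i+1} ≥ A^sep·n^{1/2} and y_i − y_{i+1} ≥ A^sep·n^{1/2} for i ∈ ⟦1,k−1⟧; g : ⟦0,n⟧ → [−∞,∞) with g(s) − p·s ≤ M^bot·n^{1/2} for all s ∈ ⟦0,n⟧; x_k ≥ g(s) − p·s + A^gap·n^{1/2} for all s ∈ ⟦0,n⟧ with s ≤ Δ^gap·n; y_k − p·n ≥ g(s) − p·s + A^gap·n^{1/2} for all s ∈ ⟦0,n⟧ with s ≥ n − Δ^gap·n; and Ω_Inter(0,n,x⃗,y⃗,∞,g) ≠ ∅.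 Let (Q_1,…,Q_k) be distributed according to the uniform probability measure on Ω_Inter(0,n,x⃗,y⃗,∞,g) and set 𝒬_i(t) = σ^{-1}·n^{-1/2}·(Q_i(t·n) − p·t·n) for t ∈ [0,1]. Then for each i ∈ ⟦1,k⟧: P( w(𝒬_i, δ) > ε ) < η. -/
open MeasureTheory Filter Topology ProbabilityTheory
open scoped ENNReal NNReal

/-- An increasing (integer) path on the integer interval `⟦T0, T1⟧`,
extended constantly to the rest of `ℤ`. -/
def IncrPath (T0 T1 : ℤ) (L : ℤ → ℤ) : Prop :=
  (∀ j : ℤ, T0 ≤ j → j < T1 → L j ≤ L (j + 1)) ∧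
  (∀ s : ℤ, s ≤ T0 → L s = L T0) ∧ (∀ s : ℤ, T1 ≤ s → L s = L T1)

/-- The set `Ω(T0,T1,x,y)` of increasing paths from `(T0,x)` to `(T1,y)`. -/
def OmegaPath (T0 T1 : ℤ) (x y : ℤ) : Set (ℤ → ℤ) :=
  {L | IncrPath T0 T1 L ∧ L T0 = x ∧ L T1 = y}

/-- Linear interpolation of a real-valued function defined on `ℤ`. -/
noncomputable def interp (f : ℤ → ℝ) (t : ℝ) : ℝ :=
  f ⌊t⌋ + (t - ⌊t⌋) * (f (⌊t⌋ + 1) - f ⌊t⌋)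

/-- Linear interpolation of an integer-valued function on `ℤ`. -/
noncomputable def interpZ (L : ℤ → ℤ) : ℝ → ℝ :=
  interp fun s => (L s : ℝ)

lemma interp_eq_on (f : ℤ → ℝ) (n : ℤ) :
    ∀ t ∈ Set.Icc (n : ℝ) ((n : ℝ) + 1),
      interp f t = f n + (t - n) * (f (n + 1) - f n) := by
  intro t ht
  rcases lt_or_eq_of_le ht.2 with h | h
  · have hfl : ⌊t⌋ = n := by
      rw [Int.floor_eq_iff]
      · exact ⟨ht.1, by exact_mod_cast h⟩
    simp [interp, hfl]
  · have hfl : ⌊t⌋ = n + 1 := by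
      rw [h, show ((n : ℝ) + 1) = ((n + 1 : ℤ) : ℝ) by push_cast; ring, Int.floor_intCast]
    rw [interp, hfl, h]
    push_cast
    ring

lemma continuous_interp (f : ℤ → ℝ) : Continuous (interp f) := by
  have hcov : (⋃ n : ℤ, Set.Icc (n : ℝ) ((n : ℝ) + 1)) = Set.univ := by
    ext t
    simp only [Set.mem_iUnion, Set.mem_univ, iff_true, Set.mem_Icc]
    exact ⟨⌊t⌋, Int.floor_le t, (Int.lt_floor_add_one t).le⟩
  have hlf : LocallyFinite fun n : ℤ => Set.Icc (n : ℝ) ((n : ℝ) + 1) := by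
    intro x
    refine ⟨Set.Ioo (x - 1) (x + 1), Ioo_mem_nhds (by linarith) (by linarith), ?_⟩
    apply Set.Finite.subset (Set.finite_Icc (⌊x⌋ - 2) (⌊x⌋ + 2))
    rintro n ⟨t, ht1, ht2⟩
    simp only [Set.mem_Icc] at ht1 ⊢
    simp only [Set.mem_Ioo] at ht2
    constructor
    · have h1 : ((⌊x⌋ - 2 : ℤ) : ℝ) < n := by
        push_cast
        have := Int.floor_le x
        linarith [ht1.2, ht2.1]
      exact_mod_cast h1.le
    · have h2 : (n : ℝ) < ((⌊x⌋ + 2 : ℤ) : ℝ) := by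
        push_cast
        have := Int.lt_floor_add_one x
        linarith [ht1.1, ht2.2]
      exact_mod_cast h2.le
  refine hlf.continuous hcov (fun n => isClosed_Icc) (fun n => ?_)
  have hc : ContinuousOn (fun t : ℝ => f n + (t - n) * (f (n + 1) - f n))
      (Set.Icc (n : ℝ) ((n : ℝ) + 1)) := (by continuity : Continuous _).continuousOn
  exact hc.congr (interp_eq_on f n)

/-- The set `Ω_Inter(T0,T1,x⃗,y⃗,f,g)` of `k`-tuples of increasing paths with prescribed
entrance and exit data, interlacing with each other and with the boundary functions
`f` (above) and `g` (below). -/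
def OmegaInter (T0 T1 : ℤ) {k : ℕ} (x y : Fin k → ℤ) (f g : ℤ → EReal) :
    Set (Fin k → ℤ → ℤ) :=
  {Q | (∀ i, IncrPath T0 T1 (Q i)) ∧ (∀ i, Q i T0 = x i) ∧ (∀ i, Q i T1 = y i) ∧
    ∀ r : ℤ, T0 < r → r ≤ T1 →
      (∀ i : Fin k, (i : ℕ) = 0 → ((Q i r : ℝ) : EReal) ≤ f (r - 1)) ∧
      (∀ i j : Fin k, (j : ℕ) = (i : ℕ) + 1 → Q j r ≤ Q i (r - 1)) ∧
      (∀ i : Fin k, (i : ℕ) = k - 1 → g r ≤ ((Q i (r - 1) : ℝ) : EReal))}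

/-- The random variable `X` is uniformly distributed on the (finite) set `S` under `P`. -/
def UniformOn {Ω E : Type*} [MeasurableSpace Ω] (P : Measure Ω) (X : Ω → E)
    (S : Set E) : Prop :=
  (∀ ω, X ω ∈ S) ∧ ∀ Q ∈ S, P {ω | X ω = Q} = ((Nat.card S : ℝ≥0∞))⁻¹

/-- The modulus of continuity `w(h, δ)` of `h` on `[a,b]`. -/
noncomputable def modCont (h : ℝ → ℝ) (a b δ : ℝ) : ℝ :=
  sSup {v : ℝ | ∃ s ∈ Set.Icc a b, ∃ t ∈ Set.Icc a b, |s - t| ≤ δ ∧ v = |h s - h t|}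


set_option linter.all false


/-- success parameter -/
noncomputable def geoPar (p : ℝ) (hp : 0 < p) : unitInterval :=
  ⟨1 / (1 + p), by positivity, by rw [div_le_one (by positivity)]; linarith⟩

lemma geoPar_ne (p : ℝ) (hp : 0 < p) : geoPar p hp ≠ 0 := by
  intro h
  have h2 := congrArg Subtype.val h
  have h3 : 1 / (1 + p) = 0 := h2
  have : 0 < 1 / (1 + p) := by positivity
  linarith

/-- i.i.d. geometric sequence with mean `p`. -/
structure IsGeo {Ω : Type} [MeasurableSpace Ω] (μ : Measure Ω) (p : ℝ) (hp : 0 < p)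
    (X : ℕ → Ω → ℕ) : Prop where
  meas : ∀ i, Measurable (X i)
  indep : iIndepFun X μ
  law : ∀ i, μ.map (X i) = geometricMeasure (geoPar p hp)

lemma exists_geo (p : ℝ) (hp : 0 < p) :
    ∃ (μ : Measure (ℕ → ℕ)), IsProbabilityMeasure μ ∧ IsGeo μ p hp (fun i ω => ω i) := by
  refine ⟨Measure.infinitePi (fun _ : ℕ => geometricMeasure (geoPar p hp)), inferInstance, ?_, ?_, ?_⟩
  · intro i; fun_prop
  · exact iIndepFun_infinitePi (X := fun x ω ↦ ω) (by fun_prop)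
  · intro i
    exact (measurePreserving_eval_infinitePi _ i).map_eq

section
variable {Ω : Type} [MeasurableSpace Ω] {μ : Measure Ω} [IsProbabilityMeasure μ]
  {p : ℝ} {hp : 0 < p} {X : ℕ → Ω → ℕ}

lemma IsGeo.shift (h : IsGeo μ p hp X) (u : ℕ) : IsGeo μ p hp (fun i => X (u + i)) :=
  ⟨fun i => h.meas _, h.indep.precomp (g := fun i => u + i) (add_right_injective u), fun i => h.law _⟩

lemma IsGeo.real_eq (h : IsGeo μ p hp X) (i k : ℕ) :
    μ.real {ω | X i ω = k} = (p / (1 + p)) ^ k * (1 / (1 + p)) := by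
  have h1 := geometricMeasure_real_singleton (geoPar_ne p hp) k
  rw [← h.law i, map_measureReal_apply (h.meas i) (measurableSet_singleton k)] at h1
  have h2 : (1 : ℝ) - (geoPar p hp : ℝ) = p / (1 + p) := by
    simp only [geoPar]; field_simp; ring
  rw [h2] at h1
  exact h1

/-- `A` only depends on the coordinates in `S`. -/
def DetBy (X : ℕ → Ω → ℕ) (S : Finset ℕ) (A : Set Ω) : Prop :=
  ∀ ω ω', (∀ i ∈ S, X i ω = X i ω') → ω ∈ A → ω' ∈ A

lemma DetBy.eq_preimage {S : Finset ℕ} {A : Set Ω} (h : DetBy X S A) :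
    A = (fun ω (i : S) => X i ω) ⁻¹' ((fun ω (i : S) => X i ω) '' A) := by
  apply Set.Subset.antisymm (Set.subset_preimage_image _ _)
  rintro ω ⟨ω', h1, h2⟩
  exact h ω' ω (fun i hi => congrFun h2 ⟨i, hi⟩) h1

lemma IsGeo.measurableSet (h : IsGeo μ p hp X) {S : Finset ℕ} {A : Set Ω} (hA : DetBy X S A) :
    MeasurableSet A := by
  rw [hA.eq_preimage]
  apply measurable_pi_lambda _ (fun i => h.meas _)
  exact MeasurableSet.of_discrete

lemma IsGeo.indep_events (h : IsGeo μ p hp X) {S T : Finset ℕ} (hST : Disjoint S T)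
    {A B : Set Ω} (hA : DetBy X S A) (hB : DetBy X T B) :
    μ.real (A ∩ B) = μ.real A * μ.real B := by
  have h1 := h.indep.indepFun_finset S T hST h.meas
  have h2 := h1.measure_inter_preimage_eq_mul ((fun ω (i : S) => X i ω) '' A)
    ((fun ω (i : T) => X i ω) '' B) MeasurableSet.of_discrete MeasurableSet.of_discrete
  rw [← hA.eq_preimage, ← hB.eq_preimage] at h2
  simp only [measureReal_def, h2, ENNReal.toReal_mul]

lemma DetBy.mono {S T : Finset ℕ} {A : Set Ω} (h : DetBy X S A) (hST : S ⊆ T) : DetBy X T A :=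
  fun ω ω' hw => h ω ω' (fun i hi => hw i (hST hi))

lemma DetBy.inter {S : Finset ℕ} {A B : Set Ω} (hA : DetBy X S A) (hB : DetBy X S B) :
    DetBy X S (A ∩ B) :=
  fun ω ω' hw hm => ⟨hA ω ω' hw hm.1, hB ω ω' hw hm.2⟩

lemma detBy_sum (B : Finset ℕ) (k : ℕ) : DetBy X B {ω | ∑ i ∈ B, X i ω = k} := by
  intro ω ω' hw hm
  simp only [Set.mem_ofPred_eq] at hm ⊢
  rw [← hm]
  exact (Finset.sum_congr rfl hw).symm

/-- convolution decomposition -/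
lemma measureReal_eq_tsum_fiber (A : Set Ω) (hA : MeasurableSet A) (f : Ω → ℕ)
    (hf : Measurable f) : HasSum (fun k => μ.real (A ∩ {ω | f ω = k})) (μ.real A) := by
  have h1 : A = ⋃ k, (A ∩ {ω | f ω = k}) := by
    ext ω; simp
  conv => arg 2; rw [h1]
  have hd : Pairwise (Function.onFun Disjoint fun k => A ∩ {ω | f ω = k}) := by
    intro i j hij
    rw [Function.onFun, Set.disjoint_left]
    rintro ω ⟨_, h2⟩ ⟨_, h3⟩
    exact hij (h2.symm.trans h3)
  have hm : ∀ k, MeasurableSet (A ∩ {ω | f ω = k}) := fun k =>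
    hA.inter (hf (measurableSet_singleton k))
  have h3 := measure_iUnion (μ := μ) hd hm
  have h4 : ∑' k, μ (A ∩ {ω | f ω = k}) ≠ ⊤ := by rw [← h3]; exact measure_ne_top _ _
  have := (ENNReal.summable_toReal h4).hasSum
  rw [measureReal_def, h3, ENNReal.tsum_toReal_eq (fun k => measure_ne_top _ _)]
  exact this

/-- negative binomial weights -/
noncomputable def W (p : ℝ) (N k : ℕ) : ℝ :=
  (N.multichoose k : ℝ) * (p / (1 + p)) ^ k * (1 / (1 + p)) ^ N

lemma W_nonneg (hp : 0 < p) (N k : ℕ) : 0 ≤ W p N k := by unfold W; positivity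

lemma multichoose_sum (N k : ℕ) :
    (N + 1).multichoose k = ∑ j ∈ Finset.range (k + 1), N.multichoose j := by
  induction k with
  | zero => simp
  | succ k ih =>
    rw [Finset.sum_range_succ, ← ih, Nat.multichoose_succ_succ, add_comm]

lemma IsGeo.law_sum (h : IsGeo μ p hp X) (B : Finset ℕ) :
    ∀ k, μ.real {ω | ∑ i ∈ B, X i ω = k} = W p B.card k := by
  induction B using Finset.induction_on with
  | empty =>
    intro k
    rcases k with _ | k
    · simp [W]
    · simp [W]
  | insert a B ha ih =>
    intro k
    have hset : {ω | ∑ i ∈ insert a B, X i ω = k} =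
        ⋃ j ∈ Finset.range (k + 1), ({ω | ∑ i ∈ B, X i ω = j} ∩ {ω | X a ω = k - j}) := by
      ext ω
      simp only [Finset.sum_insert ha, Set.mem_ofPred_eq, Set.mem_iUnion, Set.mem_inter_iff,
        Finset.mem_range, exists_prop]
      constructor
      · intro h1
        exact ⟨_, by omega, rfl, by omega⟩
      · rintro ⟨j, h1, h2, h3⟩
        omega
    have hd1 : ∀ j, DetBy X B {ω | ∑ i ∈ B, X i ω = j} := fun j => detBy_sum B j
    have hd2 : ∀ j, DetBy X {a} {ω | X a ω = j} := fun j => by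
      simpa using detBy_sum (X := X) {a} j
    rw [hset, measureReal_biUnion_finset]
    · rw [Finset.card_insert_of_notMem ha, W, multichoose_sum]
      push_cast
      rw [Finset.sum_mul, Finset.sum_mul]
      apply Finset.sum_congr rfl
      intro j hj
      rw [h.indep_events (by simpa using ha) (hd1 j) (hd2 _), ih, h.real_eq, W]
      have : k = j + (k - j) := by simp at hj; omega
      conv_rhs => rw [this, pow_add]
      ring
    · intro i _ j _ hij
      rw [Function.onFun, Set.disjoint_left]
      rintro ω ⟨h2, _⟩ ⟨h3, _⟩
      exact hij (h2.symm.trans h3)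
    · intro j _
      exact (h.measurableSet (hd1 j)).inter (h.measurableSet (hd2 _))

lemma W_ratio (hp : 0 < p) (N k : ℕ) :
    W p N (k + 1) * ((1 + p) * (k + 1)) = W p N k * (p * (N + k)) := by
  have h1 : N.multichoose (k + 1) * (k + 1) = N.multichoose k * (N + k) := by
    rcases N with _ | N
    · rcases k with _ | k <;> simp
    · rw [Nat.multichoose_eq, Nat.multichoose_eq]
      have := Nat.add_one_mul_choose_eq (N + k) k
      rw [show N + 1 + (k + 1) - 1 = N + k + 1 by omega, show N + 1 + k - 1 = N + k by omega]
      rw [← this]; ring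
  have h2 : (N.multichoose (k + 1) : ℝ) * (k + 1) = N.multichoose k * (N + k) := by
    exact_mod_cast h1
  unfold W
  have h3 : (p / (1 + p)) * (1 + p) = p := by field_simp
  calc _ = ((N.multichoose (k + 1) : ℝ) * (k + 1)) * ((p / (1 + p)) * (1 + p)) * (p / (1 + p)) ^ k
        * (1 / (1 + p)) ^ N := by ring
    _ = _ := by rw [h2, h3]; ring
end


lemma mreal_mono {Ω : Type} [MeasurableSpace Ω] {μ : Measure Ω} [IsProbabilityMeasure μ] {A B : Set Ω}
    (h : A ⊆ B) : μ.real A ≤ μ.real B := measureReal_mono h (measure_ne_top _ _)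

lemma W_step {p K : ℝ} (hp : 0 < p) (hK : 0 < K) (N k : ℕ) (hN : 2 * K / p ≤ √N) (hN1 : 1 ≤ N)
    (hk : |(k : ℝ) - p * N| ≤ K * √N) :
    W p N (k + 1) ≤ (1 + (2 * (K + 1 + p) / p) / √N) * W p N k ∧
    W p N k ≤ (1 + (2 * (K + 1 + p) / p) / √N) * W p N (k + 1) := by
  have hr := W_ratio hp N k
  have h0 := W_nonneg hp N k
  have h1 := W_nonneg hp N (k + 1)
  have hs1 : 1 ≤ √(N : ℝ) := by
    rw [Real.one_le_sqrt]; exact_mod_cast hN1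
  set r := √(N : ℝ) with hrdef
  have hrr : r * r = N := Real.mul_self_sqrt (by positivity)
  rw [abs_le] at hk
  rw [div_le_iff₀ hp] at hN
  have hk0 : (0 : ℝ) ≤ k := by positivity
  have hkp : p * N / 2 ≤ k := by
    have : K * r ≤ p * N / 2 := by rw [← hrr]; nlinarith
    linarith
  have hNr : (N : ℝ) / r = r := by rw [← hrr]; field_simp
  set C := 2 * (K + 1 + p) / p with hC
  have hCp : C * p = 2 * (K + 1 + p) := by rw [hC]; field_simp
  have hC0 : 0 < C := by positivity
  have hCr : C / r * (p * N) = 2 * (K + 1 + p) * r := by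
    rw [← hCp, ← hrr]; field_simp
  have hCr0 : 0 < C / r := by positivity
  constructor
  · have hpos : 0 < (1 + p) * ((k : ℝ) + 1) := by positivity
    rw [← mul_le_mul_iff_left₀ hpos, hr]
    have : p * (N + k) ≤ (1 + C / r) * ((1 + p) * (k + 1)) := by
      have e1 : C / r * (p * N / 2) ≤ C / r * k := mul_le_mul_of_nonneg_left hkp hCr0.le
      have e2 : 0 ≤ C / r * (p * k + 1 + p) := by positivity
      nlinarith [mul_pos hp (lt_of_lt_of_le one_pos hs1)]
    calc W p N k * (p * (N + k)) ≤ W p N k * ((1 + C / r) * ((1 + p) * (k + 1))) :=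
          mul_le_mul_of_nonneg_left this h0
      _ = _ := by ring
  · have hpos : 0 < p * ((N : ℝ) + k) := by
      have : (1 : ℝ) ≤ N := by exact_mod_cast hN1
      positivity
    rw [← mul_le_mul_iff_left₀ hpos, ← hr]
    have : (1 + p) * (k + 1) ≤ (1 + C / r) * (p * (N + k)) := by
      have e2 : 0 ≤ C / r * (p * k) := by positivity
      nlinarith [mul_pos hp (lt_of_lt_of_le one_pos hs1)]
    calc W p N (k + 1) * ((1 + p) * (k + 1)) ≤ W p N (k + 1) * ((1 + C / r) * (p * (N + k))) :=
          mul_le_mul_of_nonneg_left this h1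
      _ = _ := by ring

lemma W_comp {p K : ℝ} (hp : 0 < p) (hK : 0 < K) : ∃ B : ℝ, 0 < B ∧ ∃ N0 : ℕ, ∀ N : ℕ, N0 ≤ N →
    ∀ k l : ℕ, |(k : ℝ) - p * N| ≤ K * √N → |(l : ℝ) - p * N| ≤ K * √N →
    W p N k ≤ B * W p N l := by
  set C := 2 * (K + 1 + p) / p with hC
  have hC0 : 0 < C := by positivity
  refine ⟨Real.exp (2 * K * C), Real.exp_pos _, max 1 ⌈(2 * K / p) ^ 2⌉₊, ?_⟩
  intro N hN k l hk hl
  have hN1 : 1 ≤ N := le_trans (le_max_left _ _) hN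
  have hN2 : 2 * K / p ≤ √N := by
    apply Real.le_sqrt_of_sq_le
    exact (Nat.le_ceil _).trans (by exact_mod_cast (le_trans (le_max_right _ _) hN))
  have hr : 0 < √(N : ℝ) := by
    apply Real.sqrt_pos.mpr; exact_mod_cast hN1
  -- iterate
  have key : ∀ (k d : ℕ), |(k : ℝ) - p * N| ≤ K * √N → |((k + d : ℕ) : ℝ) - p * N| ≤ K * √N →
      W p N (k + d) ≤ Real.exp (2 * K * C) * W p N k ∧
      W p N k ≤ Real.exp (2 * K * C) * W p N (k + d) := by
    intro k d hk hl
    rw [abs_le] at hk hl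
    have it : ∀ i, i ≤ d → W p N (k + i) ≤ (1 + C / √N) ^ i * W p N k ∧
        W p N k ≤ (1 + C / √N) ^ i * W p N (k + i) := by
      intro i
      induction i with
      | zero => simp
      | succ i ih =>
        intro hi
        obtain ⟨a1, a2⟩ := ih (by omega)
        have hw : |((k + i : ℕ) : ℝ) - p * N| ≤ K * √N := by
          have : (i : ℝ) + 1 ≤ d := by exact_mod_cast hi
          have : (0 : ℝ) ≤ i := by positivity
          push_cast at hl ⊢
          rw [abs_le]
          constructor <;> linarith
        obtain ⟨b1, b2⟩ := W_step hp hK N (k + i) hN2 hN1 hw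
        rw [← hC] at b1 b2
        have hc : 0 ≤ 1 + C / √(N : ℝ) := by positivity
        have hci : 0 ≤ (1 + C / √(N : ℝ)) ^ i := by positivity
        constructor
        · calc _ ≤ _ := b1
            _ ≤ _ := mul_le_mul_of_nonneg_left a1 hc
            _ = _ := by rw [pow_succ]; ring
        · calc _ ≤ _ := a2
            _ ≤ _ := mul_le_mul_of_nonneg_left b2 hci
            _ = _ := by rw [pow_succ, ← add_assoc]; ring
    have hd : (1 + C / √(N : ℝ)) ^ d ≤ Real.exp (2 * K * C) := by
      have h1 : 1 + C / √(N : ℝ) ≤ Real.exp (C / √N) := by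
        have := Real.add_one_le_exp (C / √(N : ℝ)); linarith
      calc _ ≤ (Real.exp (C / √N)) ^ d := pow_le_pow_left₀ (by positivity) h1 d
        _ = Real.exp (d * (C / √N)) := by rw [← Real.exp_nat_mul]
        _ ≤ _ := by
          apply Real.exp_le_exp.mpr
          have : (d : ℝ) ≤ 2 * K * √N := by push_cast at hl; linarith
          calc (d : ℝ) * (C / √N) ≤ 2 * K * √N * (C / √N) :=
                mul_le_mul_of_nonneg_right this (by positivity)
            _ = _ := by field_simp
    obtain ⟨a1, a2⟩ := it d le_rfl
    exact ⟨a1.trans (mul_le_mul_of_nonneg_right hd (W_nonneg hp _ _)),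
      a2.trans (mul_le_mul_of_nonneg_right hd (W_nonneg hp _ _))⟩
  rcases le_total k l with h | h
  · obtain ⟨d, rfl⟩ := Nat.exists_eq_add_of_le h
    exact (key k d hk hl).2
  · obtain ⟨d, rfl⟩ := Nat.exists_eq_add_of_le h
    exact (key l d hl hk).1

section
variable {Ω : Type} [MeasurableSpace Ω] {μ : Measure Ω} [IsProbabilityMeasure μ]
  {p : ℝ} {hp : 0 < p} {X : ℕ → Ω → ℕ}

lemma IsGeo.mgf_bound (h : IsGeo μ p hp X) (i : ℕ) (θ : ℝ) (hθ : |θ| ≤ 1 / (4 * (1 + p))) :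
    Integrable (fun ω => Real.exp (θ * ((X i ω : ℝ) - p))) μ ∧
    mgf (fun ω => (X i ω : ℝ) - p) μ θ ≤ Real.exp ((p + 8 * p ^ 2) * θ ^ 2) := by
  have hθ1 : |θ| ≤ 1 := hθ.trans (by rw [div_le_one (by positivity)]; linarith)
  set v := p * (Real.exp θ - 1) with hv
  have h1 := Real.abs_exp_sub_one_sub_id_le hθ1
  have h2 : |Real.exp θ - 1| ≤ 2 * |θ| := Real.abs_exp_sub_one_le hθ1
  have h3 : p * |θ| ≤ 1 / 4 := by
    calc p * |θ| ≤ p * (1 / (4 * (1 + p))) := by gcongr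
      _ ≤ 1 / 4 := by rw [mul_one_div, div_le_div_iff₀ (by positivity) (by norm_num)]; linarith
  have hvabs : |v| ≤ 2 * p * |θ| := by
    rw [hv, abs_mul, abs_of_pos hp]; nlinarith
  have hv2 : |v| ≤ 1 / 2 := by linarith
  have hvs : v ^ 2 ≤ 4 * p ^ 2 * θ ^ 2 := by
    rw [← sq_abs v, ← sq_abs θ]
    calc |v| ^ 2 ≤ (2 * p * |θ|) ^ 2 := by gcongr
      _ = _ := by ring
  have hvle : v ≤ p * θ + p * θ ^ 2 := by
    rw [hv]; rw [abs_le] at h1; nlinarith [h1.2]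
  rw [abs_le] at hv2
  have hpar : (1 : ℝ) - (geoPar p hp : ℝ) = p / (1 + p) := by
    simp only [geoPar]; field_simp; ring
  have hpar2 : (geoPar p hp : ℝ) = 1 / (1 + p) := rfl
  set f : ℕ → ℝ := fun k => Real.exp (θ * ((k : ℝ) - p)) with hf
  have hterm : ∀ k : ℕ, (p / (1 + p)) ^ k * (1 / (1 + p)) * f k =
      (Real.exp (-(θ * p)) * (1 / (1 + p))) * (p / (1 + p) * Real.exp θ) ^ k := by
    intro k
    simp only [hf]
    rw [mul_pow, ← Real.exp_nat_mul, show θ * ((k : ℝ) - p) = k * θ + -(θ * p) by ring, Real.exp_add]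
    ring
  have hz0 : 0 ≤ p / (1 + p) * Real.exp θ := by positivity
  have hz1 : p / (1 + p) * Real.exp θ < 1 := by
    rw [div_mul_eq_mul_div, div_lt_one (by positivity)]
    linarith [hv2.2]
  have hsum := (hasSum_geometric_of_lt_one hz0 hz1).mul_left (Real.exp (-(θ * p)) * (1 / (1 + p)))
  simp_rw [← hterm] at hsum
  have hIntg : Integrable f (geometricMeasure (geoPar p hp)) := by
    rw [integrable_geometricMeasure_iff (geoPar_ne p hp), hpar, hpar2]
    have : ∀ k, ‖f k‖ = f k := fun k => Real.norm_of_nonneg (Real.exp_pos _).le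
    simp_rw [this]
    exact hsum.summable
  have hval := hasSum_integral_geometricMeasure (geoPar_ne p hp) hIntg
  rw [hpar, hpar2] at hval
  simp only [smul_eq_mul] at hval
  have hI := hval.unique hsum
  rw [← h.law i] at hIntg hI
  have hIntgX := (integrable_map_measure (by exact AEStronglyMeasurable.of_discrete)
    (h.meas i).aemeasurable).mp hIntg
  refine ⟨hIntgX, ?_⟩
  rw [integral_map (h.meas i).aemeasurable (by exact AEStronglyMeasurable.of_discrete)] at hI
  rw [mgf]
  have hI' : ∫ ω, Real.exp (θ * ((X i ω : ℝ) - p)) ∂μ =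
    Real.exp (-(θ * p)) * (1 / (1 + p)) * (1 - p / (1 + p) * Real.exp θ)⁻¹ := hI
  rw [hI']
  have e1 : (1 / (1 + p)) * (1 - p / (1 + p) * Real.exp θ)⁻¹ = (1 - v)⁻¹ := by
    rw [hv]
    rw [one_div, ← mul_inv]
    congr 1
    field_simp
    ring
  rw [mul_assoc, e1]
  have e2 : (1 - v)⁻¹ ≤ Real.exp (v + 2 * v ^ 2) := by
    rw [inv_le_iff_one_le_mul₀ (by linarith)]
    have := Real.add_one_le_exp (v + 2 * v ^ 2)
    calc 1 ≤ (v + 2 * v ^ 2 + 1) * (1 - v) := by nlinarith [sq_nonneg v]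
      _ ≤ _ := mul_le_mul_of_nonneg_right this (by linarith)
  calc _ ≤ Real.exp (-(θ * p)) * Real.exp (v + 2 * v ^ 2) := by gcongr
    _ = Real.exp (-(θ * p) + (v + 2 * v ^ 2)) := (Real.exp_add _ _).symm
    _ ≤ _ := by
      apply Real.exp_le_exp.mpr
      nlinarith

/-- partial sums -/
def Sm (X : ℕ → Ω → ℕ) (t : ℕ) (ω : Ω) : ℕ := ∑ i ∈ Finset.range t, X i ω

/-- centred partial sums -/
def Zc (p : ℝ) (X : ℕ → Ω → ℕ) (t : ℕ) (ω : Ω) : ℝ := (Sm X t ω : ℝ) - p * t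

lemma Sm_add (u t : ℕ) (ω : Ω) : Sm X (u + t) ω = Sm X u ω + Sm (fun i => X (u + i)) t ω := by
  simp only [Sm, Finset.sum_range_add]

lemma Zc_add (u t : ℕ) (ω : Ω) :
    Zc p X (u + t) ω = Zc p X u ω + Zc p (fun i => X (u + i)) t ω := by
  simp only [Zc, Sm_add]; push_cast; ring

lemma Sm_congr {t : ℕ} {ω ω' : Ω} (h : ∀ i < t, X i ω = X i ω') : Sm X t ω = Sm X t ω' := by
  apply Finset.sum_congr rfl
  intro i hi; exact h i (by simpa using hi)

lemma Zc_congr {t : ℕ} {ω ω' : Ω} (h : ∀ i < t, X i ω = X i ω') : Zc p X t ω = Zc p X t ω' := by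
  simp only [Zc, Sm_congr h]

lemma IsGeo.chernoff (h : IsGeo μ p hp X) (N : ℕ) (θ a : ℝ) (hθ0 : 0 ≤ θ)
    (hθ : θ ≤ 1 / (4 * (1 + p))) :
    μ.real {ω | a < |Zc p X N ω|} ≤ 2 * Real.exp (-θ * a + (p + 8 * p ^ 2) * N * θ ^ 2) := by
  set Y : ℕ → Ω → ℝ := fun i ω => (X i ω : ℝ) - p with hY
  have hYm : ∀ i, Measurable (Y i) := fun i =>
    (measurable_from_nat (f := fun k : ℕ => (k : ℝ) - p)).comp (h.meas i)
  have hYi : iIndepFun Y μ := h.indep.comp (fun _ (k : ℕ) => (k : ℝ) - p) (fun _ => measurable_from_nat)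
  have hsum : (∑ i ∈ Finset.range N, Y i) = Zc p X N := by
    ext ω
    simp [Zc, Sm, hY, Finset.sum_apply, Finset.sum_sub_distrib, mul_comm]
  have hb : ∀ t : ℝ, |t| ≤ 1 / (4 * (1 + p)) →
      Integrable (fun ω => Real.exp (t * Zc p X N ω)) μ ∧
      mgf (Zc p X N) μ t ≤ Real.exp ((p + 8 * p ^ 2) * N * t ^ 2) := by
    intro t ht
    constructor
    · have := hYi.integrable_exp_mul_sum (t := t) hYm (s := Finset.range N)
        (fun i _ => (h.mgf_bound i t ht).1)
      rwa [hsum] at this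
    · rw [← hsum, hYi.mgf_sum hYm]
      calc _ ≤ ∏ i ∈ Finset.range N, Real.exp ((p + 8 * p ^ 2) * t ^ 2) :=
            Finset.prod_le_prod (fun i _ => mgf_nonneg) (fun i _ => (h.mgf_bound i t ht).2)
        _ = _ := by
          rw [Finset.prod_const, Finset.card_range, ← Real.exp_nat_mul]; congr 1; ring
  have h1 := hb θ (by rwa [abs_of_nonneg hθ0])
  have h2 := hb (-θ) (by rwa [abs_neg, abs_of_nonneg hθ0])
  have c1 := measure_ge_le_exp_mul_mgf a hθ0 h1.1
  have c2 := measure_le_le_exp_mul_mgf (-a) (neg_nonpos.mpr hθ0) h2.1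
  calc μ.real {ω | a < |Zc p X N ω|}
      ≤ μ.real ({ω | a ≤ Zc p X N ω} ∪ {ω | Zc p X N ω ≤ -a}) := by
        apply mreal_mono
        intro ω hω
        rcases lt_abs.mp (show a < |Zc p X N ω| from hω) with h | h
        · left; exact h.le
        · right; show Zc p X N ω ≤ -a; linarith
    _ ≤ _ := measureReal_union_le _ _
    _ ≤ Real.exp (-θ * a) * Real.exp ((p + 8 * p ^ 2) * N * θ ^ 2) +
        Real.exp (-(-θ) * (-a)) * Real.exp ((p + 8 * p ^ 2) * N * (-θ) ^ 2) := by
        apply add_le_add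
        · exact c1.trans (mul_le_mul_of_nonneg_left h1.2 (Real.exp_pos _).le)
        · exact c2.trans (mul_le_mul_of_nonneg_left h2.2 (Real.exp_pos _).le)
    _ = _ := by
        rw [← Real.exp_add, ← Real.exp_add, two_mul]
        congr 2 <;> ring

lemma IsGeo.max_ineq (h : IsGeo μ p hp X) (N : ℕ) (θ a : ℝ) (hθ0 : 0 ≤ θ)
    (hθ : θ ≤ 1 / (4 * (1 + p))) :
    μ.real {ω | ∃ t ≤ N, 2 * a < |Zc p X t ω|} ≤
      4 * Real.exp (-θ * a + (p + 8 * p ^ 2) * N * θ ^ 2) := by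
  set e := Real.exp (-θ * a + (p + 8 * p ^ 2) * N * θ ^ 2) with he
  by_cases hbig : 1 < 4 * e
  · exact measureReal_le_one.trans hbig.le
  push Not at hbig
  set A : ℕ → Set Ω := fun t => {ω | 2 * a < |Zc p X t ω| ∧ ∀ s < t, |Zc p X s ω| ≤ 2 * a} with hA
  set B : ℕ → Set Ω := fun t => {ω | |Zc p (fun i => X (t + i)) (N - t) ω| ≤ a} with hB
  have dA : ∀ t, DetBy X (Finset.range t) (A t) := by
    intro t ω ω' hw hm
    have hw' : ∀ s ≤ t, Zc p X s ω = Zc p X s ω' := fun s hs =>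
      Zc_congr (fun i hi => hw i (by simp; omega))
    refine ⟨by rw [← hw' t le_rfl]; exact hm.1, fun s hs => by rw [← hw' s hs.le]; exact hm.2 s hs⟩
  have dB : ∀ t ≤ N, DetBy X (Finset.Ico t N) (B t) := by
    intro t ht ω ω' hw hm
    show |_| ≤ a
    rw [← Zc_congr (ω := ω) (fun i hi => hw (t + i) (by simp; omega))]
    exact hm
  have hBm : ∀ t ≤ N, 1 / 2 ≤ μ.real (B t) := by
    intro t ht
    have c := (h.shift t).chernoff (N - t) θ a hθ0 hθ
    have hc : μ.real (B t)ᶜ ≤ 1 / 2 := by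
      have : (B t)ᶜ = {ω | a < |Zc p (fun i => X (t + i)) (N - t) ω|} := by
        ext ω; simp [hB]
      rw [this]
      refine c.trans ?_
      have : Real.exp (-θ * a + (p + 8 * p ^ 2) * ((N - t : ℕ) : ℝ) * θ ^ 2) ≤ e := by
        apply Real.exp_le_exp.mpr
        have : ((N - t : ℕ) : ℝ) ≤ N := by exact_mod_cast Nat.sub_le _ _
        gcongr
      linarith
    rw [probReal_compl_eq_one_sub (h.measurableSet (dB t ht))] at hc
    linarith
  have hsub : {ω | ∃ t ≤ N, 2 * a < |Zc p X t ω|} ⊆ ⋃ t ∈ Finset.range (N + 1), A t := by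
    rintro ω ⟨t, ht, hω⟩
    classical
    have hex : ∃ t, 2 * a < |Zc p X t ω| := ⟨t, hω⟩
    simp only [Set.mem_iUnion, Finset.mem_range]
    refine ⟨Nat.find hex, by have := Nat.find_le (h := hex) hω; omega, Nat.find_spec hex, ?_⟩
    intro s hs
    exact not_lt.mp (Nat.find_min hex hs)
  have hdis : Set.PairwiseDisjoint (↑(Finset.range (N + 1))) (fun t => A t ∩ B t) := by
    intro i _ j _ hij
    rw [Function.onFun, Set.disjoint_left]
    rintro ω ⟨h1, _⟩ ⟨h2, _⟩
    rcases lt_or_gt_of_ne hij with hl | hl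
    · exact absurd h1.1 (not_lt.mpr (h2.2 i hl))
    · exact absurd h2.1 (not_lt.mpr (h1.2 j hl))
  have hU : ∑ t ∈ Finset.range (N + 1), μ.real (A t ∩ B t) ≤ μ.real {ω | a < |Zc p X N ω|} := by
    rw [← measureReal_biUnion_finset hdis]
    · apply mreal_mono
      intro ω hω
      simp only [Set.mem_iUnion, Finset.mem_range] at hω
      obtain ⟨t, ht, h1, h2⟩ := hω
      have h2' : |Zc p (fun i => X (t + i)) (N - t) ω| ≤ a := h2
      have := Zc_add (p := p) (X := X) t (N - t) ω
      rw [Nat.add_sub_cancel' (by omega : t ≤ N)] at this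
      show a < |Zc p X N ω|
      have h3 := abs_sub_abs_le_abs_sub (Zc p X t ω) (Zc p X t ω - Zc p X N ω)
      have h4 : Zc p X t ω - Zc p X N ω = - Zc p (fun i => X (t + i)) (N - t) ω := by linarith
      rw [sub_sub_cancel, h4, abs_neg] at h3
      linarith [h1.1]
    · intro t ht
      exact (h.measurableSet (dA t)).inter (h.measurableSet (dB t (by simp at ht; omega)))
  calc _ ≤ μ.real (⋃ t ∈ Finset.range (N + 1), A t) := mreal_mono hsub
    _ ≤ ∑ t ∈ Finset.range (N + 1), μ.real (A t) := measureReal_biUnion_finset_le _ _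
    _ ≤ ∑ t ∈ Finset.range (N + 1), 2 * μ.real (A t ∩ B t) := by
        apply Finset.sum_le_sum
        intro t ht
        have htN : t ≤ N := by simp at ht; omega
        rw [h.indep_events _ (dA t) (dB t htN)]
        · nlinarith [hBm t htN, measureReal_nonneg (μ := μ) (s := A t)]
        · rw [Finset.disjoint_left]; intro i hi hj; simp at hi hj; omega
    _ = 2 * ∑ t ∈ Finset.range (N + 1), μ.real (A t ∩ B t) := by rw [Finset.mul_sum]
    _ ≤ 2 * (2 * e) := by
        have := h.chernoff N θ a hθ0 hθ
        linarith
    _ = 4 * e := by ring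
end


lemma sqrt_large (c : ℝ) : ∃ N0 : ℕ, 1 ≤ N0 ∧ ∀ N : ℕ, N0 ≤ N → c ≤ √(N : ℝ) := by
  refine ⟨max 1 ⌈c ^ 2⌉₊, le_max_left _ _, fun N hN => ?_⟩
  apply Real.le_sqrt_of_sq_le
  exact (Nat.le_ceil _).trans (by exact_mod_cast (le_trans (le_max_right _ _) hN))

lemma W_lower {p K : ℝ} (hp : 0 < p) (hK : 0 < K) : ∃ c : ℝ, 0 < c ∧ ∃ N0 : ℕ, ∀ N : ℕ, N0 ≤ N →
    ∀ k : ℕ, |(k : ℝ) - p * N| ≤ K * √N → c / √N ≤ W p N k := by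
  obtain ⟨μ, hμ, hX⟩ := exists_geo p hp
  set C := p + 8 * p ^ 2 with hC
  have hC0 : 0 < C := by positivity
  set K' := K + C + 2 with hK'
  have hK'0 : 0 < K' := by positivity
  obtain ⟨B, hB, N1, hcomp⟩ := W_comp hp hK'0
  obtain ⟨N2, hN21, hN2⟩ := sqrt_large (4 * (1 + p))
  refine ⟨1 / (2 * (2 * K' + 1) * B), by positivity, max N1 N2, ?_⟩
  intro N hN k hk
  have hN1 := le_trans (le_max_left _ _) hN
  have hN2 := hN2 N (le_trans (le_max_right _ _) hN)
  have hs1 : 1 ≤ √(N : ℝ) := by linarith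
  have hs0 : 0 < √(N : ℝ) := by linarith
  have hch := hX.chernoff N (1 / √N) (K' * √N) (by positivity)
    (one_div_le_one_div_of_le (by positivity) hN2)
  have hNs : (N : ℝ) * (1 / √N) ^ 2 = 1 := by
    rw [div_pow, Real.sq_sqrt (by positivity)]
    have : (0 : ℝ) < N := Real.sqrt_pos.mp hs0
    field_simp
  rw [show -(1 / √(N : ℝ)) * (K' * √N) + (p + 8 * p ^ 2) * N * (1 / √N) ^ 2 = -K' + C by
    rw [mul_assoc (p + 8 * p ^ 2), hNs]; field_simp; ring] at hch
  have hexp : 2 * Real.exp (-K' + C) ≤ 1 / 2 := by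
    have h1 : Real.exp (-K' + C) ≤ Real.exp (-2) := Real.exp_le_exp.mpr (by rw [hK']; linarith)
    have h2 : Real.exp (-2) ≤ 1 / 4 := by
      rw [Real.exp_neg, inv_le_comm₀ (Real.exp_pos _) (by norm_num)]
      have h3 := Real.add_one_le_exp (1 : ℝ)
      have : Real.exp 2 = Real.exp 1 * Real.exp 1 := by rw [← Real.exp_add]; norm_num
      rw [this]; nlinarith
    linarith
  set F := Finset.Icc ⌈p * N - K' * √N⌉₊ ⌊p * N + K' * √N⌋₊ with hF
  have hcard : (F.card : ℝ) ≤ (2 * K' + 1) * √N := by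
    rw [hF, Nat.card_Icc]
    rcases le_total ⌈p * N - K' * √(N : ℝ)⌉₊ (⌊p * N + K' * √(N : ℝ)⌋₊ + 1) with h | h
    · rw [Nat.cast_sub h]
      push_cast
      have h1 := Nat.le_ceil (p * N - K' * √(N : ℝ))
      have h2 := Nat.floor_le (show 0 ≤ p * N + K' * √(N : ℝ) by positivity)
      linarith
    · rw [Nat.sub_eq_zero_of_le h]; push_cast; positivity
  have hcov : (Set.univ : Set (ℕ → ℕ)) ⊆ {ω | K' * √N < |Zc p (fun i ω => ω i) N ω|} ∪
      ⋃ l ∈ F, {ω | ∑ i ∈ Finset.range N, ω i = l} := by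
    intro ω _
    by_cases hω : K' * √N < |Zc p (fun i ω => ω i) N ω|
    · left; exact hω
    · right
      simp only [Set.mem_iUnion]
      refine ⟨∑ i ∈ Finset.range N, ω i, ?_, rfl⟩
      push Not at hω
      rw [Zc, Sm, abs_le] at hω
      rw [hF, Finset.mem_Icc, Nat.ceil_le]
      refine ⟨by linarith, Nat.le_floor (by linarith)⟩
  have h1 : (1 : ℝ) ≤ 1 / 2 + ∑ l ∈ F, W p N l := by
    calc (1 : ℝ) = μ.real Set.univ := by simp
      _ ≤ _ := mreal_mono hcov
      _ ≤ _ := measureReal_union_le _ _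
      _ ≤ _ := by
        apply add_le_add (hch.trans hexp)
        refine (measureReal_biUnion_finset_le _ _).trans ?_
        apply Finset.sum_le_sum
        intro l _
        rw [hX.law_sum, Finset.card_range]
  have h2 : ∑ l ∈ F, W p N l ≤ F.card * (B * W p N k) := by
    rw [← nsmul_eq_mul]
    apply Finset.sum_le_card_nsmul
    intro l hl
    apply hcomp N hN1
    · rw [hF, Finset.mem_Icc, Nat.ceil_le] at hl
      have := Nat.floor_le (show 0 ≤ p * N + K' * √(N : ℝ) by positivity)
      have h3 : (l : ℝ) ≤ ⌊p * N + K' * √(N : ℝ)⌋₊ := by exact_mod_cast hl.2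
      rw [abs_le]; constructor <;> linarith [hl.1]
    · refine hk.trans ?_
      gcongr; linarith
  have hBW : 0 ≤ B * W p N k := mul_nonneg hB.le (W_nonneg hp _ _)
  have h3 : (1 : ℝ) / 2 ≤ (2 * K' + 1) * √N * (B * W p N k) := by
    have := mul_le_mul_of_nonneg_right hcard hBW
    linarith
  rw [div_div, div_le_iff₀ (by positivity)]
  nlinarith

lemma W_upper {p : ℝ} (hp : 0 < p) : ∃ C : ℝ, 0 < C ∧ ∃ N0 : ℕ, ∀ N : ℕ, N0 ≤ N →
    ∀ k : ℕ, W p N k ≤ C / √N := by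
  obtain ⟨μ, hμ, hX⟩ := exists_geo p hp
  obtain ⟨B, hB, N1, hcomp⟩ := W_comp hp one_pos
  obtain ⟨N2, hN21, hN2⟩ := sqrt_large (4 + p)
  refine ⟨4 * B, by positivity, max N1 N2, ?_⟩
  intro N hN k
  have hN1 := le_trans (le_max_left _ _) hN
  have hNpos : 1 ≤ N := hN21.trans (le_trans (le_max_right _ _) hN)
  have hN2 := hN2 N (le_trans (le_max_right _ _) hN)
  have hNr : (1 : ℝ) ≤ N := by exact_mod_cast hNpos
  have hs0 : 0 < √(N : ℝ) := by linarith
  have a1 := Nat.le_ceil (p * N)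
  have a2 := Nat.ceil_lt_add_one (show 0 ≤ p * (N : ℝ) by positivity)
  have b0 : 0 ≤ p * (N : ℝ) - p := by nlinarith
  have b1 := Nat.floor_le b0
  have b2 := Nat.lt_floor_add_one (p * (N : ℝ) - p)
  set k1 := ⌈p * (N : ℝ)⌉₊
  set k0 := ⌊p * (N : ℝ) - p⌋₊
  have key : ∃ k' : ℕ, |(k' : ℝ) - p * N| ≤ 1 * √N ∧ W p N k ≤ W p N k' := by
    rcases le_or_gt k1 k with h | h
    · refine ⟨k1, by rw [abs_le]; constructor <;> linarith, ?_⟩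
      have : ∀ d, W p N (k1 + d) ≤ W p N k1 := by
        intro d
        induction d with
        | zero => exact le_rfl
        | succ d ih =>
          refine le_trans ?_ ih
          have hr := W_ratio hp N (k1 + d)
          have hd : (0 : ℝ) ≤ d := by positivity
          have hle : p * ((N : ℝ) + (k1 + d : ℕ)) ≤ (1 + p) * (((k1 + d : ℕ) : ℝ) + 1) := by
            push_cast; nlinarith
          have hpos : 0 < (1 + p) * (((k1 + d : ℕ) : ℝ) + 1) := by positivity
          rw [← mul_le_mul_iff_left₀ hpos]
          rw [← add_assoc, hr]
          exact mul_le_mul_of_nonneg_left hle (W_nonneg hp _ _)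
      obtain ⟨d, rfl⟩ := Nat.exists_eq_add_of_le h
      exact this d
    · rcases le_or_gt k k0 with h' | h'
      · refine ⟨k0, by rw [abs_le]; constructor <;> linarith, ?_⟩
        have : ∀ d, ∀ k, k + d = k0 → W p N k ≤ W p N k0 := by
          intro d
          induction d with
          | zero => intro k hk; rw [← hk]; exact le_rfl
          | succ d ih =>
            intro k hk
            refine le_trans ?_ (ih (k + 1) (by omega))
            have hr := W_ratio hp N k
            have hk' : (k : ℝ) + 1 + d = k0 := by exact_mod_cast (by omega : k + 1 + d = k0)
            have hd : (0 : ℝ) ≤ d := by positivity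
            have hle : (1 + p) * ((k : ℝ) + 1) ≤ p * ((N : ℝ) + k) := by nlinarith
            have hpos : 0 < (1 + p) * ((k : ℝ) + 1) := by positivity
            rw [← mul_le_mul_iff_left₀ hpos, hr]
            exact mul_le_mul_of_nonneg_left hle (W_nonneg hp _ _)
        exact this (k0 - k) k (by omega)
      · refine ⟨k, ?_, le_rfl⟩
        have h1 : (k : ℝ) ≤ k1 := by exact_mod_cast h.le
        have h2 : (k0 : ℝ) + 1 ≤ k := by exact_mod_cast h'
        rw [abs_le]; constructor <;> linarith
  obtain ⟨k', hk', hle⟩ := key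
  refine hle.trans ?_
  set d := ⌊√(N : ℝ) / 2⌋₊ with hd
  have d1 := Nat.floor_le (show 0 ≤ √(N : ℝ) / 2 by positivity)
  have d2 := Nat.lt_floor_add_one (√(N : ℝ) / 2)
  have hsum : ∑ i ∈ Finset.range d, W p N (k1 + i) ≤ 1 := by
    have : ∑ i ∈ Finset.range d, W p N (k1 + i) =
        μ.real (⋃ i ∈ Finset.range d, {ω : ℕ → ℕ | ∑ j ∈ Finset.range N, ω j = k1 + i}) := by
      rw [measureReal_biUnion_finset]
      · apply Finset.sum_congr rfl
        intro i _
        rw [hX.law_sum, Finset.card_range]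
      · intro i _ j _ hij
        rw [Function.onFun, Set.disjoint_left]
        intro ω h1 h2
        exact hij (by have := h1.symm.trans h2; omega)
      · intro i _
        exact hX.measurableSet (detBy_sum _ _)
    rw [this]
    exact measureReal_le_one
  have hlow : ∀ i ∈ Finset.range d, W p N k' / B ≤ W p N (k1 + i) := by
    intro i hi
    rw [div_le_iff₀ hB, mul_comm]
    apply hcomp N hN1 _ _ hk'
    have hi' : (i : ℝ) + 1 ≤ d := by exact_mod_cast Finset.mem_range.mp hi
    have : (0 : ℝ) ≤ i := by positivity
    push_cast
    rw [abs_le]; constructor <;> linarith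
  have h3 := Finset.card_nsmul_le_sum _ _ _ hlow
  rw [Finset.card_range, nsmul_eq_mul] at h3
  have h4 : √(N : ℝ) / 4 ≤ d := by linarith
  have h5 : 0 ≤ W p N k' / B := div_nonneg (W_nonneg hp _ _) hB.le
  have h6 := mul_le_mul_of_nonneg_right h4 h5
  have h7 : √(N : ℝ) / 4 * (W p N k' / B) ≤ 1 := by linarith
  rw [le_div_iff₀ hs0]
  rw [div_mul_div_comm, div_le_one (by positivity)] at h7
  linarith

section
variable {Ω : Type} [MeasurableSpace Ω] {μ : Measure Ω} [IsProbabilityMeasure μ]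
  {p : ℝ} {hp : 0 < p} {X : ℕ → Ω → ℕ}

lemma IsGeo.law_Sm (h : IsGeo μ p hp X) (n m : ℕ) : μ.real {ω | Sm X n ω = m} = W p n m := by
  have := h.law_sum (Finset.range n) m
  rwa [Finset.card_range] at this

lemma detBy_max (u N : ℕ) (b : ℝ) :
    DetBy X (Finset.Ico u (u + N)) {ω | ∃ t ≤ N, b < |Zc p (fun i => X (u + i)) t ω|} := by
  rintro ω ω' hw ⟨t, ht, hm⟩
  refine ⟨t, ht, ?_⟩
  rw [← Zc_congr (ω := ω) (fun i hi => hw (u + i) (by simp; omega))]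
  exact hm

lemma IsGeo.split (h : IsGeo μ p hp X) {u N n : ℕ} (hu : u + N ≤ n) {E : Set Ω}
    (hE : DetBy X (Finset.Ico u (u + N)) E) (D : ℝ) (hD : ∀ k, W p (n - N) k ≤ D) (m : ℕ) :
    μ.real (E ∩ {ω | Sm X n ω = m}) ≤ μ.real E * D := by
  set I := Finset.Ico u (u + N) with hI
  set J := Finset.range n \ I with hJ
  have hIsub : I ⊆ Finset.range n := by
    intro i hi; simp [hI] at hi; simp; omega
  have hdisj : Disjoint I J := Finset.disjoint_sdiff
  have hJc : J.card = n - N := by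
    rw [hJ, Finset.card_sdiff_of_subset hIsub]; simp [hI]
  have hs : ∀ ω, Sm X n ω = ∑ i ∈ I, X i ω + ∑ i ∈ J, X i ω := by
    intro ω
    rw [Sm, ← Finset.sum_sdiff hIsub, add_comm]
  have hmE := h.measurableSet hE
  have hfm : Measurable (fun ω => ∑ i ∈ I, X i ω) :=
    Finset.measurable_sum _ (fun i _ => h.meas i)
  have hSm : MeasurableSet {ω | Sm X n ω = m} := h.measurableSet (detBy_sum (Finset.range n) m)
  have s1 := measureReal_eq_tsum_fiber (μ := μ) _ (hmE.inter hSm) _ hfm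
  have s2 := (measureReal_eq_tsum_fiber (μ := μ) _ hmE _ hfm).mul_right D
  refine hasSum_le ?_ s1 s2
  intro s
  calc _ ≤ μ.real ((E ∩ {ω | ∑ i ∈ I, X i ω = s}) ∩ {ω | ∑ i ∈ J, X i ω = m - s}) := by
        apply mreal_mono
        rintro ω ⟨⟨h1, h2⟩, h3⟩
        refine ⟨⟨h1, h3⟩, ?_⟩
        have h2' : Sm X n ω = m := h2
        have h3' : ∑ i ∈ I, X i ω = s := h3
        show _ = _
        rw [hs, h3'] at h2'
        omega
    _ = μ.real (E ∩ {ω | ∑ i ∈ I, X i ω = s}) * W p (n - N) (m - s) := by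
        rw [h.indep_events hdisj (hE.inter (detBy_sum I s)) (detBy_sum J _), h.law_sum, hJc]
    _ ≤ _ := mul_le_mul_of_nonneg_left (hD _) measureReal_nonneg

end

lemma sqrt_quarter {a n : ℕ} (h : n ≤ 4 * a) : √(n : ℝ) / 2 ≤ √(a : ℝ) := by
  apply Real.le_sqrt_of_sq_le
  rw [div_pow, Real.sq_sqrt (by positivity)]
  have : (n : ℝ) ≤ 4 * a := by exact_mod_cast h
  linarith

lemma mul_inv_sq {N : ℕ} (h : 0 < √(N : ℝ)) : (N : ℝ) * (1 / √N) ^ 2 = 1 := by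
  rw [div_pow, Real.sq_sqrt (by positivity)]
  have : (0 : ℝ) < N := Real.sqrt_pos.mp h
  field_simp

lemma blk {p : ℝ} (hp : 0 < p) : ∃ lam c : ℝ, 0 < lam ∧ 0 < c ∧ ∃ N0 : ℕ, 1 ≤ N0 ∧
    ∀ (Ω : Type) [MeasurableSpace Ω] (μ : Measure Ω) [IsProbabilityMeasure μ] (X : ℕ → Ω → ℕ),
    IsGeo μ p hp X → ∀ N : ℕ, N0 ≤ N → ∀ r : ℕ, |(r : ℝ) - p * N| ≤ 3 * √N →
    c / √N ≤ μ.real {ω | Sm X N ω = r ∧ ∀ t ≤ N, |Zc p X t ω| ≤ lam * √N} := by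
  obtain ⟨c1, hc1, N1, hlow⟩ := W_lower hp (show (0 : ℝ) < 3 by norm_num)
  obtain ⟨C, hC, N2, hup⟩ := W_upper hp
  obtain ⟨N3, hN31, hN3⟩ := sqrt_large (4 * (1 + p))
  set C' := p + 8 * p ^ 2 with hC'
  have hC'0 : 0 < C' := by positivity
  set l := C' + 32 * C / c1 with hl
  have hl0 : 0 < l := by positivity
  refine ⟨4 * l, c1 / 2, by positivity, by positivity, N1 + 4 * N2 + 4 + N3, by omega, ?_⟩
  intro Ω _ μ _ X hX N hN r hr
  have hs := hN3 N (by omega)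
  have hs0 : 0 < √(N : ℝ) := by linarith
  have hL := hlow N (by omega) r hr
  rw [← hX.law_Sm] at hL
  have hexp : 4 * Real.exp (-(1 / √(N : ℝ)) * (l * √N) + (p + 8 * p ^ 2) * N * (1 / √N) ^ 2)
      ≤ c1 / (8 * C) := by
    rw [mul_assoc (p + 8 * p ^ 2), mul_inv_sq hs0]
    rw [show -(1 / √(N : ℝ)) * (l * √N) + (p + 8 * p ^ 2) * 1 = -(32 * C / c1) by
      rw [hl]; field_simp; ring]
    have h1 := Real.add_one_le_exp (32 * C / c1)
    have h2 : Real.exp (-(32 * C / c1)) ≤ c1 / (32 * C) := by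
      rw [Real.exp_neg, inv_le_comm₀ (Real.exp_pos _) (by positivity), inv_div]
      linarith
    calc _ ≤ 4 * (c1 / (32 * C)) := by linarith
      _ = _ := by field_simp; norm_num
  -- generic block
  have gen : ∀ u H, u + H ≤ N → N ≤ 4 * (N - H) →
      μ.real ({ω | ∃ t ≤ H, 2 * (l * √N) < |Zc p (fun i => X (u + i)) t ω|} ∩ {ω | Sm X N ω = r})
        ≤ c1 / 4 / √N := by
    intro u H hu hH
    have hsq := sqrt_quarter hH
    refine (hX.split hu (detBy_max u H _) (C / (√N / 2)) ?_ r).trans ?_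
    · intro k
      refine (hup (N - H) (by omega) k).trans ?_
      gcongr
    · have hm := (hX.shift u).max_ineq H (1 / √N) (l * √N) (by positivity)
        (one_div_le_one_div_of_le (by positivity) hs)
      have : μ.real {ω | ∃ t ≤ H, 2 * (l * √N) < |Zc p (fun i => X (u + i)) t ω|} ≤ c1 / (8 * C) := by
        refine hm.trans (le_trans ?_ hexp)
        have : (H : ℝ) ≤ N := by exact_mod_cast (by omega : H ≤ N)
        gcongr
      calc _ ≤ c1 / (8 * C) * (C / (√N / 2)) := mul_le_mul_of_nonneg_right this (by positivity)
        _ = _ := by field_simp; norm_num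
  have g1 := gen 0 (N / 2) (by omega) (by omega)
  have g2 := gen (N / 2) (N - N / 2) (by omega) (by omega)
  have hcov : {ω | Sm X N ω = r} ⊆
      {ω | Sm X N ω = r ∧ ∀ t ≤ N, |Zc p X t ω| ≤ 4 * l * √N} ∪
      (({ω | ∃ t ≤ N / 2, 2 * (l * √N) < |Zc p (fun i => X (0 + i)) t ω|} ∩ {ω | Sm X N ω = r}) ∪
       ({ω | ∃ t ≤ N - N / 2, 2 * (l * √N) < |Zc p (fun i => X (N / 2 + i)) t ω|} ∩
          {ω | Sm X N ω = r})) := by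
    intro ω hω
    by_cases h1 : ∃ t ≤ N / 2, 2 * (l * √N) < |Zc p (fun i => X (0 + i)) t ω|
    · exact Or.inr (Or.inl ⟨h1, hω⟩)
    by_cases h2 : ∃ t ≤ N - N / 2, 2 * (l * √N) < |Zc p (fun i => X (N / 2 + i)) t ω|
    · exact Or.inr (Or.inr ⟨h2, hω⟩)
    left
    refine ⟨hω, ?_⟩
    push Not at h1 h2
    simp only [zero_add] at h1
    have hpos : 0 < l * √(N : ℝ) := by positivity
    intro t ht
    rcases le_total t (N / 2) with h | h
    · have := h1 t h
      linarith
    · obtain ⟨s, rfl⟩ := Nat.exists_eq_add_of_le h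
      rw [Zc_add]
      have := h1 _ le_rfl
      have := h2 s (by omega)
      refine (abs_add_le _ _).trans ?_
      linarith
  have h1 := mreal_mono (μ := μ) hcov
  have h2 := h1.trans (measureReal_union_le _ _)
  have h3 := measureReal_union_le (μ := μ) ({ω | ∃ t ≤ N / 2, 2 * (l * √N) < |Zc p (fun i => X (0 + i)) t ω|} ∩ {ω | Sm X N ω = r})
       ({ω | ∃ t ≤ N - N / 2, 2 * (l * √N) < |Zc p (fun i => X (N / 2 + i)) t ω|} ∩
          {ω | Sm X N ω = r})
  have h4 : c1 / √N = c1 / 2 / √N + (c1 / 4 / √N + c1 / 4 / √N) := by ring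
  linarith


/-- grid point of the block decomposition -/
def gridPt (n R j : ℕ) : ℕ := min (j * (n / R + 1)) n

/-- the event that some block has a large oscillation -/
def badEv {Ω : Type} (p : ℝ) (X : ℕ → Ω → ℕ) (n R : ℕ) (b : ℝ) : Set Ω :=
  {ω | ∃ j < R, ∃ t ≤ min (n / R + 1) (n - gridPt n R j),
    b < |Zc p (fun i => X (gridPt n R j + i)) t ω|}

lemma modB {p : ℝ} (hp : 0 < p) {ε η M : ℝ} (hε : 0 < ε) (hη : 0 < η) (hM : 0 < M) :
    ∃ R : ℕ, 0 < R ∧ ∃ N0 : ℕ, ∀ (Ω : Type) [MeasurableSpace Ω] (μ : Measure Ω)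
    [IsProbabilityMeasure μ] (X : ℕ → Ω → ℕ), IsGeo μ p hp X → ∀ n : ℕ, N0 ≤ n → ∀ m : ℕ,
    |(m : ℝ) - p * n| ≤ M * √n →
    μ.real (badEv p X n R (ε * √n) ∩ {ω | Sm X n ω = m}) ≤ η * μ.real {ω | Sm X n ω = m} := by
  obtain ⟨c1, hc1, N1, hlow⟩ := W_lower hp hM
  obtain ⟨C, hC, N2, hup⟩ := W_upper hp
  set C' := p + 8 * p ^ 2 with hC'
  have hC'0 : 0 < C' := by positivity
  -- choose x
  have hx : ∃ x : ℕ, 2 ≤ x ∧ (x : ℝ) ^ 2 * Real.exp (-(x * ε / 2)) ≤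
      η * c1 / (8 * C * Real.exp (2 * C')) := by
    have ht := Real.tendsto_pow_mul_exp_neg_atTop_nhds_zero 2
    have ht2 : Tendsto (fun x : ℕ => (x : ℝ) * ε / 2) atTop atTop := by
      have : (fun x : ℕ => (x : ℝ) * ε / 2) = fun x : ℕ => (x : ℝ) * (ε / 2) := by
        ext x; ring
      rw [this]
      exact tendsto_natCast_atTop_atTop.atTop_mul_const (by positivity)
    have ht3 := ht.comp ht2
    have hpos : 0 < (ε / 2) ^ 2 * (η * c1 / (8 * C * Real.exp (2 * C'))) := by positivity
    obtain ⟨x, hx1, hx2⟩ := ((ht3.eventually_le_const hpos).and (eventually_ge_atTop 2)).exists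
    refine ⟨x, hx2, ?_⟩
    simp only [Function.comp] at hx1
    have : ((x : ℝ) * ε / 2) ^ 2 * Real.exp (-(x * ε / 2)) =
      (ε / 2) ^ 2 * ((x : ℝ) ^ 2 * Real.exp (-(x * ε / 2))) := by ring
    rw [this] at hx1
    exact le_of_mul_le_mul_left hx1 (by positivity)
  obtain ⟨x, hx2, hx⟩ := hx
  obtain ⟨N3, hN31, hN3⟩ := sqrt_large (4 * (1 + p) * x)
  refine ⟨x ^ 2, by positivity, N1 + 4 * N2 + 2 + N3 + x ^ 2, ?_⟩
  intro Ω _ μ _ X hX n hn m hm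
  set R := x ^ 2 with hR
  have hR4 : 4 ≤ R := by rw [hR]; nlinarith
  have hx0 : (0 : ℝ) < x := by exact_mod_cast (by omega : 0 < x)
  have hs := hN3 n (by omega)
  have hs0 : 0 < √(n : ℝ) := lt_of_lt_of_le (by positivity) hs
  have hL := hlow n (by omega) m hm
  rw [← hX.law_Sm] at hL
  have hdiv : n / R ≤ n / 4 := Nat.div_le_div_left hR4 (by norm_num)
  have hn0 : (0 : ℝ) < n := by exact_mod_cast (by omega : 0 < n)
  have hdiv2 : ((n / R + 1 : ℕ) : ℝ) ≤ 2 * (n / x ^ 2) := by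
    have h1 : ((n / R : ℕ) : ℝ) ≤ n / x ^ 2 := by
      have := Nat.cast_div_le (α := ℝ) (m := n) (n := R)
      rw [hR] at this ⊢
      exact_mod_cast this
    have h2 : (1 : ℝ) ≤ n / x ^ 2 := by
      rw [one_le_div (by positivity)]
      exact_mod_cast (by omega : x ^ 2 ≤ n)
    push_cast
    linarith
  have gen : ∀ j, μ.real ({ω | ∃ t ≤ min (n / R + 1) (n - gridPt n R j),
      ε * √n < |Zc p (fun i => X (gridPt n R j + i)) t ω|} ∩ {ω | Sm X n ω = m}) ≤
      4 * Real.exp (-(x * ε / 2) + 2 * C') * (C / (√n / 2)) := by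
    intro j
    have hg : gridPt n R j ≤ n := min_le_right _ _
    set u := gridPt n R j
    set H := min (n / R + 1) (n - u) with hH
    have hH1 : H ≤ n / R + 1 := min_le_left _ _
    have hH2 : H ≤ n - u := min_le_right _ _
    have hsq : √(n : ℝ) / 2 ≤ √((n - H : ℕ) : ℝ) := sqrt_quarter (by omega)
    refine (hX.split (by omega) (detBy_max u H _) (C / (√n / 2)) ?_ m).trans ?_
    · intro k
      refine (hup (n - H) (by omega) k).trans ?_
      gcongr
    · apply mul_le_mul_of_nonneg_right _ (by positivity)
      have hm := (hX.shift u).max_ineq H (x / √n) (ε * √n / 2) (by positivity)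
        (by rw [div_le_div_iff₀ hs0 (by positivity)]; linarith)
      rw [show 2 * (ε * √(n : ℝ) / 2) = ε * √n by ring] at hm
      refine hm.trans ?_
      apply mul_le_mul_of_nonneg_left _ (by norm_num : (0:ℝ) ≤ 4)
      apply Real.exp_le_exp.mpr
      apply add_le_add
      · apply le_of_eq; field_simp
      · have hHle : (H : ℝ) ≤ 2 * (n / x ^ 2) := le_trans (by exact_mod_cast hH1) hdiv2
        calc (p + 8 * p ^ 2) * H * (x / √n) ^ 2 ≤ C' * (2 * (n / x ^ 2)) * (x / √n) ^ 2 := by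
              gcongr
          _ = 2 * C' := by
              rw [div_pow, Real.sq_sqrt hn0.le]; field_simp
  have hcov : badEv p X n R (ε * √n) ∩ {ω | Sm X n ω = m} ⊆ ⋃ j ∈ Finset.range R,
      ({ω | ∃ t ≤ min (n / R + 1) (n - gridPt n R j),
      ε * √n < |Zc p (fun i => X (gridPt n R j + i)) t ω|} ∩ {ω | Sm X n ω = m}) := by
    rintro ω ⟨⟨j, hj, h1⟩, h2⟩
    simp only [Set.mem_iUnion, Finset.mem_range]
    exact ⟨j, hj, h1, h2⟩
  calc _ ≤ _ := mreal_mono hcov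
    _ ≤ _ := measureReal_biUnion_finset_le _ _
    _ ≤ ∑ j ∈ Finset.range R, 4 * Real.exp (-(x * ε / 2) + 2 * C') * (C / (√n / 2)) :=
        Finset.sum_le_sum (fun j _ => gen j)
    _ = ((x : ℝ) ^ 2 * Real.exp (-(x * ε / 2))) * (8 * C * Real.exp (2 * C')) / √n := by
        rw [Finset.sum_const, Finset.card_range, nsmul_eq_mul, Real.exp_add, hR]
        push_cast
        field_simp
        norm_num
    _ ≤ (η * c1 / (8 * C * Real.exp (2 * C'))) * (8 * C * Real.exp (2 * C')) / √n := by
        gcongr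
    _ = η * (c1 / √n) := by field_simp
    _ ≤ _ := mul_le_mul_of_nonneg_left hL hη.le

section
variable {Ω : Type} [MeasurableSpace Ω] {μ : Measure Ω} [IsProbabilityMeasure μ]
  {p : ℝ} {hp : 0 < p} {X : ℕ → Ω → ℕ}

lemma IsGeo.step (h : IsGeo μ p hp X) {u N : ℕ} {lam q : ℝ} {ψ : ℕ → ℝ} {G : Set Ω}
    (hG : DetBy X (Finset.range u) G) (hGs : ∀ ω ∈ G, |Zc p X u ω - ψ u| ≤ √N)
    (hψ : |ψ (u + N) - ψ u| ≤ √N) (hN : 3 * √N ≤ p * N)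
    (hblk : ∀ r : ℕ, |(r : ℝ) - p * N| ≤ 3 * √N →
      q ≤ μ.real {ω | Sm (fun i => X (u + i)) N ω = r ∧
        ∀ t ≤ N, |Zc p (fun i => X (u + i)) t ω| ≤ lam * √N})
    (s' : ℕ) (hs' : |(s' : ℝ) - p * (u + N : ℕ) - ψ (u + N)| ≤ √N) :
    μ.real G * q ≤ μ.real (G ∩ ({ω | Sm X (u + N) ω = s'} ∩
      {ω | ∀ t ≤ N, |Zc p (fun i => X (u + i)) t ω| ≤ lam * √N})) := by
  have hfm : Measurable (Sm X u) := Finset.measurable_sum _ (fun i _ => h.meas i)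
  have hGm := h.measurableSet hG
  have dT : DetBy X (Finset.range (u + N)) {ω | Sm X (u + N) ω = s'} := detBy_sum _ _
  have dL : DetBy X (Finset.Ico u (u + N))
      {ω | ∀ t ≤ N, |Zc p (fun i => X (u + i)) t ω| ≤ lam * √N} := by
    intro ω ω' hw hm t ht
    rw [← Zc_congr (ω := ω) (fun i hi => hw (u + i) (by simp; omega))]
    exact hm t ht
  have s1 := (measureReal_eq_tsum_fiber (μ := μ) _ hGm _ hfm).mul_right q
  have s2 := measureReal_eq_tsum_fiber (μ := μ) _
    (hGm.inter ((h.measurableSet dT).inter (h.measurableSet dL))) _ hfm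
  refine hasSum_le ?_ s1 s2
  intro s
  by_cases hne : (G ∩ {ω | Sm X u ω = s}).Nonempty
  · obtain ⟨ω0, h1, h2⟩ := hne
    have h2' : Sm X u ω0 = s := h2
    have h3 := hGs ω0 h1
    rw [Zc, h2'] at h3
    rw [abs_le] at h3 hψ hs'
    push_cast at hs'
    have hss : s ≤ s' := by
      have : (s : ℝ) ≤ s' := by linarith
      exact_mod_cast this
    have hr : |((s' - s : ℕ) : ℝ) - p * N| ≤ 3 * √N := by
      rw [Nat.cast_sub hss, abs_le]
      constructor <;> linarith
    have hb := hblk _ hr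
    have dR : DetBy X (Finset.Ico u (u + N)) {ω | Sm (fun i => X (u + i)) N ω = s' - s ∧
        ∀ t ≤ N, |Zc p (fun i => X (u + i)) t ω| ≤ lam * √N} := by
      intro ω ω' hw hm
      refine ⟨?_, dL ω ω' hw hm.2⟩
      rw [← Sm_congr (ω := ω) (fun i hi => hw (u + i) (by simp; omega))]
      exact hm.1
    have dS : DetBy X (Finset.range u) {ω | Sm X u ω = s} := detBy_sum _ _
    calc _ ≤ μ.real (G ∩ {ω | Sm X u ω = s}) * μ.real {ω | Sm (fun i => X (u + i)) N ω = s' - s ∧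
        ∀ t ≤ N, |Zc p (fun i => X (u + i)) t ω| ≤ lam * √N} :=
          mul_le_mul_of_nonneg_left hb measureReal_nonneg
      _ = μ.real ((G ∩ {ω | Sm X u ω = s}) ∩ {ω | Sm (fun i => X (u + i)) N ω = s' - s ∧
        ∀ t ≤ N, |Zc p (fun i => X (u + i)) t ω| ≤ lam * √N}) := by
          rw [h.indep_events _ (hG.inter dS) dR]
          rw [Finset.disjoint_left]; intro i hi hj; simp at hi hj; omega
      _ ≤ _ := by
          apply mreal_mono
          rintro ω ⟨⟨a1, a2⟩, a3, a4⟩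
          have a2' : Sm X u ω = s := a2
          refine ⟨⟨a1, ?_, a4⟩, a2⟩
          show Sm X (u + N) ω = s'
          rw [Sm_add, a2', a3]
          omega
  · rw [Set.not_nonempty_iff_eq_empty.mp hne]
    simp
end

set_option maxHeartbeats 4000000 in
lemma corr {p : ℝ} (hp : 0 < p) {K a : ℝ} (hK : 0 < K) (ha : 0 < a) :
    ∃ c : ℝ, 0 < c ∧ ∃ N0 : ℕ, ∀ (Ω : Type) [MeasurableSpace Ω] (μ : Measure Ω)
    [IsProbabilityMeasure μ] (X : ℕ → Ω → ℕ), IsGeo μ p hp X → ∀ n : ℕ, N0 ≤ n →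
    ∀ ψ : ℕ → ℝ, ψ 0 = 0 → (∀ u v : ℕ, |ψ (u + v) - ψ u| ≤ K * v / √n) →
    ∀ m : ℕ, (m : ℝ) = p * n + ψ n →
    c * μ.real {ω | Sm X n ω = m} ≤
      μ.real {ω | Sm X n ω = m ∧ ∀ t ≤ n, |Zc p X t ω - ψ t| ≤ a * √n} := by
  obtain ⟨lam, c0, hlam, hc0, N1, hN11, hblk⟩ := blk hp
  obtain ⟨C, hC, N2, hup⟩ := W_upper hp
  obtain ⟨N3, hN31, hN3⟩ := sqrt_large (3 / p + 2)
  obtain ⟨N4, hN41, hN4⟩ := sqrt_large (K / p)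
  obtain ⟨J', hJ'⟩ := exists_nat_ge (4 * K ^ 2 + 2 * (2 + lam) ^ 2 / a ^ 2)
  set J := J' + 1 with hJdef
  have hJ1 : 4 * K ^ 2 ≤ (J : ℝ) := by
    have : 0 ≤ 2 * (2 + lam) ^ 2 / a ^ 2 := by positivity
    rw [hJdef]; push_cast; linarith
  have hJ2 : 2 * (2 + lam) ^ 2 ≤ a ^ 2 * (J : ℝ) := by
    have h1 : 2 * (2 + lam) ^ 2 / a ^ 2 ≤ J := by
      rw [hJdef]; push_cast; nlinarith
    rw [div_le_iff₀ (by positivity)] at h1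
    linarith
  refine ⟨(c0 / 2) ^ J' * c0 / C, by positivity, J * (N1 + N3 + J) + N4 + N2 + 1, ?_⟩
  intro Ω _ μ _ X hX n hn ψ hψ0 hψ m hm
  set D := n / J with hD
  have hDge : N1 + N3 + J ≤ D := by
    rw [hD, Nat.le_div_iff_mul_le (by omega)]
    nlinarith
  have hJD : J * D ≤ n := Nat.mul_div_le n J
  have hJD2 : n < J * D + J := by
    have := Nat.lt_mul_div_succ n (show 0 < J by omega)
    rw [← hD] at this; linarith
  have hn0 : (0 : ℝ) < n := by exact_mod_cast (by omega : 0 < n)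
  have hsn : 0 < √(n : ℝ) := Real.sqrt_pos.mpr hn0
  have hKn := hN4 n (by omega)
  -- facts for block lengths
  have blkfacts : ∀ N : ℕ, D ≤ N → N ≤ 2 * D →
      K * N / √n ≤ √N ∧ (2 + lam) * √N ≤ a * √n ∧ 3 * √N ≤ p * N ∧ 2 ≤ √(N : ℝ) := by
    intro N h1 h2
    have hJN : (J : ℝ) * N ≤ 2 * n := by
      have : J * N ≤ 2 * n := by nlinarith
      exact_mod_cast this
    have hsN := hN3 N (by omega)
    have hsN2 : 3 / p ≤ √(N : ℝ) := by linarith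
    have hN0 : (0 : ℝ) ≤ N := by positivity
    have hs0 : 0 < √(N : ℝ) := lt_of_lt_of_le (by positivity) hsN
    have hsq := Real.mul_self_sqrt hN0
    have hsqn := Real.mul_self_sqrt hn0.le
    have hKs : K * √N ≤ √n := by
      apply Real.le_sqrt_of_sq_le
      rw [mul_pow, Real.sq_sqrt hN0]
      nlinarith
    refine ⟨?_, ?_, ?_, ?_⟩
    · rw [div_le_iff₀ hsn]
      calc K * N = (K * √N) * √N := by rw [mul_assoc, hsq]
        _ ≤ √n * √N := by gcongr
        _ = _ := mul_comm _ _
    · have : ((2 + lam) * √N) ^ 2 ≤ (a * √n) ^ 2 := by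
        rw [mul_pow, mul_pow, Real.sq_sqrt hN0, Real.sq_sqrt hn0.le]
        nlinarith
      exact le_of_sq_le_sq this (by positivity)
    · rw [div_le_iff₀ hp] at hsN2
      nlinarith
    · have : 0 < 3 / p := by positivity
      linarith
  -- corridor extension
  have ext : ∀ u N : ℕ, D ≤ N → N ≤ 2 * D → ∀ ω, |Zc p X u ω - ψ u| ≤ √D →
      (∀ t ≤ u, |Zc p X t ω - ψ t| ≤ a * √n) →
      (∀ t ≤ N, |Zc p (fun i => X (u + i)) t ω| ≤ lam * √N) →
      ∀ t ≤ u + N, |Zc p X t ω - ψ t| ≤ a * √n := by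
    intro u N h1 h2 ω hu hold hnew t ht
    rcases le_total t u with h | h
    · exact hold t h
    · obtain ⟨s, rfl⟩ := Nat.exists_eq_add_of_le h
      obtain ⟨f1, f2, f3, f4⟩ := blkfacts N h1 h2
      have b1 := hnew s (by omega)
      have b2 : |ψ (u + s) - ψ u| ≤ √N := by
        refine (hψ u s).trans (le_trans ?_ f1)
        have : (s : ℝ) ≤ N := by exact_mod_cast (by omega : s ≤ N)
        gcongr
      have b3 : √(D : ℝ) ≤ √N := Real.sqrt_le_sqrt (by exact_mod_cast h1)
      rw [Zc_add]
      rw [abs_le] at *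
      constructor <;> linarith
  set G : ℕ → Set Ω := fun j => {ω | |Zc p X (j * D) ω - ψ (j * D)| ≤ √D ∧
    ∀ t ≤ j * D, |Zc p X t ω - ψ t| ≤ a * √n} with hG
  have dG : ∀ j, DetBy X (Finset.range (j * D)) (G j) := by
    intro j ω ω' hw hm
    have hw' : ∀ s ≤ j * D, Zc p X s ω = Zc p X s ω' := fun s hs =>
      Zc_congr (fun i hi => hw i (by rw [Finset.mem_range]; omega))
    refine ⟨by rw [← hw' _ le_rfl]; exact hm.1, fun s hs => by rw [← hw' s hs]; exact hm.2 s hs⟩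
  have iter : ∀ j, (j ≤ J') → (c0 / 2) ^ j ≤ μ.real (G j) := by
    intro j
    induction j with
    | zero =>
      intro _
      have : G 0 = Set.univ := by
        ext ω
        simp [hG, Zc, Sm, hψ0]
        positivity
      rw [this]; simp
    | succ j ih =>
      intro hj
      have ih := ih (by omega)
      obtain ⟨f1, f2, f3, f4⟩ := blkfacts D le_rfl (by omega)
      have hD0 : 0 < √(D : ℝ) := by linarith
      have hu : (j + 1) * D = j * D + D := by ring
      set cen : ℝ := p * (j * D + D : ℕ) + ψ (j * D + D) with hcen
      have hcen0 : 0 ≤ cen := by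
        have h1 := hψ 0 (j * D + D)
        rw [zero_add, hψ0, sub_zero, abs_le] at h1
        have h2 : K * ((j * D + D : ℕ) : ℝ) / √n ≤ p * (j * D + D : ℕ) := by
          rw [div_le_iff₀ hsn]
          rw [div_le_iff₀ hp] at hKn
          have : (0 : ℝ) ≤ (j * D + D : ℕ) := by positivity
          nlinarith
        rw [hcen]; linarith [h1.1]
      have e1 := Nat.le_ceil cen
      have e2 := Nat.ceil_lt_add_one hcen0
      set d := ⌊√(D : ℝ)⌋₊ with hd
      have d1 := Nat.floor_le hD0.le
      have d2 := Nat.lt_floor_add_one (√(D : ℝ))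
      have hpsi : |ψ (j * D + D) - ψ (j * D)| ≤ √D := (hψ _ _).trans f1
      set E : ℕ → Set Ω := fun i => G j ∩ ({ω | Sm X (j * D + D) ω = ⌈cen⌉₊ + i} ∩
        {ω | ∀ t ≤ D, |Zc p (fun i => X (j * D + i)) t ω| ≤ lam * √D}) with hE
      have hwin : ∀ i < d, |((⌈cen⌉₊ + i : ℕ) : ℝ) - p * (j * D + D : ℕ) - ψ (j * D + D)| ≤ √D := by
        intro i hi
        have hi' : (i : ℝ) + 1 ≤ d := by exact_mod_cast hi
        have : (0 : ℝ) ≤ i := by positivity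
        push_cast at hcen ⊢
        rw [abs_le]; constructor <;> linarith
      have hEm : ∀ i < d, μ.real (G j) * (c0 / √D) ≤ μ.real (E i) := by
        intro i hi
        apply hX.step (dG j) (fun ω hω => hω.1) hpsi f3 _ _ (hwin i hi)
        intro r hr
        exact hblk Ω μ _ (hX.shift _) D (by omega) r hr
      have hEsub : (⋃ i ∈ Finset.range d, E i) ⊆ G (j + 1) := by
        intro ω hω
        simp only [Set.mem_iUnion, Finset.mem_range] at hω
        obtain ⟨i, hi, ⟨g1, g2⟩, k1, k2⟩ := hω
        show _ ∧ _
        rw [hu]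
        refine ⟨?_, ext (j * D) D le_rfl (by omega) ω g1 g2 k2⟩
        have k1' : Sm X (j * D + D) ω = ⌈cen⌉₊ + i := k1
        rw [Zc, k1']
        exact hwin i hi
      have hdis : Set.PairwiseDisjoint (↑(Finset.range d)) E := by
        intro i _ i' _ hij
        rw [Function.onFun, Set.disjoint_left]
        rintro ω ⟨_, h1, _⟩ ⟨_, h2, _⟩
        have h1' : Sm X (j * D + D) ω = ⌈cen⌉₊ + i := h1
        have h2' : Sm X (j * D + D) ω = ⌈cen⌉₊ + i' := h2
        exact hij (by omega)
      have hmE : ∀ i, MeasurableSet (E i) := by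
        intro i
        refine (hX.measurableSet (dG j)).inter ((hX.measurableSet
          (S := Finset.range (j * D + D)) (detBy_sum _ _)).inter ?_)
        refine hX.measurableSet (S := Finset.range (j * D + D)) ?_
        intro ω ω' hw hm t ht
        rw [← Zc_congr (ω := ω) (fun i hi => hw (j * D + i) (by simp; omega))]
        exact hm t ht
      calc (c0 / 2) ^ (j + 1) = (c0 / 2) ^ j * (c0 / 2) := pow_succ _ _
        _ ≤ μ.real (G j) * (c0 / 2) := by gcongr
        _ = (√D / 2) * (μ.real (G j) * (c0 / √D)) := by field_simp
        _ ≤ d * (μ.real (G j) * (c0 / √D)) := by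
            apply mul_le_mul_of_nonneg_right _ (by positivity)
            linarith
        _ ≤ ∑ i ∈ Finset.range d, μ.real (E i) := by
            have := Finset.card_nsmul_le_sum (Finset.range d) (fun i => μ.real (E i)) _
              (fun i hi => hEm i (Finset.mem_range.mp hi))
            rwa [Finset.card_range, nsmul_eq_mul] at this
        _ = μ.real (⋃ i ∈ Finset.range d, E i) := by
            rw [measureReal_biUnion_finset hdis (fun i _ => hmE i)]
        _ ≤ _ := mreal_mono hEsub
  have hlast := iter J' le_rfl
  set N := n - J' * D with hN
  have hJJ : J * D = J' * D + D := by rw [hJdef]; ring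
  have hNadd : J' * D + N = n := by omega
  have hND : D ≤ N := by omega
  have hND2 : N ≤ 2 * D := by omega
  obtain ⟨f1, f2, f3, f4⟩ := blkfacts N hND hND2
  have hDN : √(D : ℝ) ≤ √N := Real.sqrt_le_sqrt (by exact_mod_cast hND)
  have hfin := hX.step (N := N) (lam := lam) (q := c0 / √N) (ψ := ψ) (dG J')
    (fun ω hω => hω.1.trans hDN) ((hψ _ _).trans f1) f3
    (fun r hr => hblk Ω μ _ (hX.shift _) N (by omega) r hr) m
    (by rw [hNadd, hm]; simp)
  have hNn : √(N : ℝ) ≤ √n := Real.sqrt_le_sqrt (by exact_mod_cast (by omega : N ≤ n))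
  have hup' := hup n (by omega) m
  rw [← hX.law_Sm] at hup'
  have hN0 : 0 < √(N : ℝ) := by linarith
  calc _ ≤ (c0 / 2) ^ J' * c0 / C * (C / √n) := by gcongr
    _ = (c0 / 2) ^ J' * (c0 / √n) := by field_simp
    _ ≤ μ.real (G J') * (c0 / √N) := by gcongr
    _ ≤ _ := hfin
    _ ≤ _ := by
      apply mreal_mono
      rintro ω ⟨⟨g1, g2⟩, k1, k2⟩
      rw [hNadd] at k1
      refine ⟨k1, ?_⟩
      have := ext (J' * D) N hND hND2 ω g1 g2 k2
      rwa [hNadd] at this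


/-- coordinate process -/
abbrev Xc : ℕ → (ℕ → ℕ) → ℕ := fun i ω => ω i

/-- the path started at `x` with increments `ω` -/
def pth (x : ℤ) (n : ℕ) (ω : ℕ → ℕ) : ℤ → ℤ :=
  fun s => x + (Sm Xc (min s.toNat n) ω : ℤ)

lemma Sm_succ' (t : ℕ) (ω : ℕ → ℕ) : Sm Xc (t + 1) ω = Sm Xc t ω + ω t := by
  simp [Sm, Finset.sum_range_succ]

lemma pth_nat (x : ℤ) (n : ℕ) (ω : ℕ → ℕ) {t : ℕ} (ht : t ≤ n) :
    pth x n ω t = x + Sm Xc t ω := by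
  simp [pth, ht]

lemma pth_zero (x : ℤ) (n : ℕ) (ω : ℕ → ℕ) : pth x n ω 0 = x := by
  simp [pth, Sm]

lemma pth_incr (x : ℤ) (n : ℕ) (ω : ℕ → ℕ) : IncrPath 0 n (pth x n ω) := by
  refine ⟨?_, ?_, ?_⟩
  · intro j h0 h1
    lift j to ℕ using h0
    have h1' : j < n := by exact_mod_cast h1
    have := pth_nat x n ω (t := j + 1) h1'
    push_cast at this
    rw [this, pth_nat x n ω h1'.le, Sm_succ']
    push_cast
    have : (0 : ℤ) ≤ ω j := by positivity
    linarith
  · intro s hs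
    simp [pth, Int.toNat_of_nonpos hs]
  · intro s hs
    have : n ≤ s.toNat := by omega
    simp [pth, this]

lemma pth_eq_iff {x : ℤ} {n : ℕ} {L : ℤ → ℤ} (hL : IncrPath 0 n L) (h0 : L 0 = x) (ω : ℕ → ℕ) :
    pth x n ω = L ↔ ∀ i < n, ω i = (L (i + 1) - L i).toNat := by
  constructor
  · intro h i hi
    rw [← h]
    have := pth_nat x n ω (t := i + 1) hi
    push_cast at this
    rw [this, pth_nat x n ω hi.le, Sm_succ']
    push_cast
    omega
  · intro h
    have key : ∀ t : ℕ, t ≤ n → x + (Sm Xc t ω : ℤ) = L t := by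
      intro t
      induction t with
      | zero => intro _; simp [Sm, h0]
      | succ t ih =>
        intro ht
        have := ih (by omega)
        have h1 := hL.1 t (by positivity) (by exact_mod_cast ht)
        have h2 := h t (by omega)
        rw [Sm_succ', h2]
        push_cast
        rw [Int.toNat_of_nonneg (by linarith)]
        linarith
    ext s
    rcases le_total s 0 with hs | hs
    · rw [hL.2.1 s hs, h0]; simp [pth, Int.toNat_of_nonpos hs, Sm]
    · rcases le_total s n with hs' | hs'
      · lift s to ℕ using hs
        rw [pth_nat x n ω (by exact_mod_cast hs'), key s (by exact_mod_cast hs')]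
      · rw [hL.2.2 s hs', ← key n le_rfl]
        have : n ≤ s.toNat := by omega
        simp [pth, this]

lemma pth_surj {x : ℤ} {n : ℕ} {L : ℤ → ℤ} (hL : IncrPath 0 n L) (h0 : L 0 = x) :
    pth x n (fun i => (L (i + 1) - L i).toNat) = L := by
  rw [pth_eq_iff hL h0]; intro i _; rfl

lemma pth_mem_iff {x y : ℤ} {n : ℕ} (hxy : x ≤ y) (ω : ℕ → ℕ) :
    pth x n ω ∈ OmegaPath 0 n x y ↔ Sm Xc n ω = (y - x).toNat := by
  constructor
  · rintro ⟨_, _, h⟩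
    rw [pth_nat x n ω le_rfl] at h
    omega
  · intro h
    refine ⟨pth_incr _ _ _, pth_zero _ _ _, ?_⟩
    rw [pth_nat x n ω le_rfl, h]
    omega

lemma mass_cyl {μ : Measure (ℕ → ℕ)} [IsProbabilityMeasure μ] {p : ℝ} {hp : 0 < p}
    (h : IsGeo μ p hp Xc) (a : ℕ → ℕ) (n : ℕ) :
    μ.real {ω | ∀ i < n, ω i = a i} =
      (p / (1 + p)) ^ (∑ i ∈ Finset.range n, a i) * (1 / (1 + p)) ^ n := by
  induction n with
  | zero => simp
  | succ n ih =>
    have e : {ω : ℕ → ℕ | ∀ i < n + 1, ω i = a i} =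
        {ω | ∀ i < n, ω i = a i} ∩ {ω | Xc n ω = a n} := by
      ext ω
      constructor
      · intro hh; exact ⟨fun i hi => hh i (by omega), hh n (by omega)⟩
      · rintro ⟨h1, h2⟩ i hi
        rcases Nat.lt_succ_iff_lt_or_eq.mp hi with h3 | rfl
        · exact h1 i h3
        · exact h2
    have d1 : DetBy Xc (Finset.range n) {ω : ℕ → ℕ | ∀ i < n, ω i = a i} := by
      intro ω ω' hw hm i hi
      rw [← hm i hi]; exact (hw i (by simpa using hi)).symm
    have d2 : DetBy Xc {n} {ω : ℕ → ℕ | Xc n ω = a n} := by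
      intro ω ω' hw hm
      have := hw n (by simp)
      show Xc n ω' = a n
      rw [← this]; exact hm
    rw [e, h.indep_events (by simp) d1 d2, ih, h.real_eq, Finset.sum_range_succ]
    ring

/-- mass of a single path -/
noncomputable def kap (p : ℝ) (n : ℕ) (x y : ℤ) : ℝ :=
  (p / (1 + p)) ^ (y - x).toNat * (1 / (1 + p)) ^ n

lemma mass_path {μ : Measure (ℕ → ℕ)} [IsProbabilityMeasure μ] {p : ℝ} {hp : 0 < p}
    (h : IsGeo μ p hp Xc) {n : ℕ} {x y : ℤ} {L : ℤ → ℤ} (hL : L ∈ OmegaPath 0 n x y) :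
    μ.real {ω | pth x n ω = L} = kap p n x y := by
  obtain ⟨h1, h2, h3⟩ := hL
  have e : {ω | pth x n ω = L} = {ω | ∀ i < n, ω i = (fun i : ℕ => (L (i + 1) - L i).toNat) i} := by
    ext ω; exact pth_eq_iff h1 h2 ω
  rw [e, mass_cyl h, kap]
  congr 2
  have h4 := pth_surj h1 h2
  have h5 := congrFun h4 n
  rw [pth_nat _ _ _ le_rfl, h3] at h5
  have : Sm Xc n (fun i => (L (i + 1) - L i).toNat) = ∑ i ∈ Finset.range n, (L (i + 1) - L i).toNat := rfl
  rw [← this]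
  omega

lemma omegaPath_finite (n : ℕ) (x y : ℤ) : (OmegaPath 0 n x y).Finite := by
  set m := (y - x).toNat
  apply (Set.finite_range (fun f : Fin n → Fin (m + 1) =>
    pth x n (fun i => if h : i < n then (f ⟨i, h⟩ : ℕ) else 0))).subset
  rintro L ⟨h1, h2, h3⟩
  have mono : ∀ t : ℕ, ∀ s : ℕ, s + t ≤ n → L s ≤ L (s + t : ℕ) := by
    intro t
    induction t with
    | zero => intro s _; simp
    | succ t ih =>
      intro s hs
      refine (ih s (by omega)).trans ?_
      have := h1.1 (s + t : ℕ) (by positivity) (by exact_mod_cast (by omega : s + t < n))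
      push_cast at this ⊢
      rw [← add_assoc]; exact this
  refine ⟨fun i => ⟨(L (i + 1) - L i).toNat, ?_⟩, ?_⟩
  · have a1 := mono i 0 (by omega)
    have a2 := mono (n - (i + 1)) (i + 1) (by omega)
    rw [show (i : ℕ) + 1 + (n - (i + 1)) = n by omega, h3] at a2
    rw [zero_add] at a1
    simp only [Nat.cast_zero] at a1
    rw [h2] at a1
    push_cast at a2
    omega
  · dsimp only
    rw [pth_eq_iff h1 h2]
    intro i hi
    simp [hi]

lemma cnt {μ : Measure (ℕ → ℕ)} [IsProbabilityMeasure μ] {p : ℝ} {hp : 0 < p}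
    (h : IsGeo μ p hp Xc) {n : ℕ} {x y : ℤ} {A : Set (ℤ → ℤ)} (hA : A ⊆ OmegaPath 0 n x y) :
    μ.real {ω | pth x n ω ∈ A} = A.ncard * kap p n x y := by
  have hf : A.Finite := (omegaPath_finite n x y).subset hA
  have e : {ω | pth x n ω ∈ A} = ⋃ L ∈ hf.toFinset, {ω | pth x n ω = L} := by
    ext ω; simp
  rw [e, measureReal_biUnion_finset]
  · rw [Finset.sum_congr rfl (fun L hL => mass_path h (hA (by simpa using hL)))]
    rw [Finset.sum_const, nsmul_eq_mul, Set.ncard_eq_toFinset_card A hf]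
  · intro L _ L' _ hne
    rw [Function.onFun, Set.disjoint_left]
    intro ω a b
    exact hne (Eq.trans (Eq.symm a) b)
  · intro L hL
    obtain ⟨h1, h2, h3⟩ := hA (by simpa using hL)
    refine h.measurableSet (S := Finset.range n) ?_
    intro ω ω' hw hm
    show pth x n ω' = L
    have hm' := (pth_eq_iff h1 h2 ω).mp hm
    rw [pth_eq_iff h1 h2]
    intro i hi
    rw [← hm' i hi]; exact (hw i (by simpa using hi)).symm

/-- paths with a large block oscillation -/
def badP (p : ℝ) (n R : ℕ) (b : ℝ) (x y : ℤ) : Set (ℤ → ℤ) :=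
  {L | L ∈ OmegaPath 0 n x y ∧ ∃ j < R, ∃ t ≤ min (n / R + 1) (n - gridPt n R j),
    b < |(L (gridPt n R j + t : ℕ) : ℝ) - L (gridPt n R j : ℕ) - p * t|}

lemma badCount {p : ℝ} (hp : 0 < p) {ε η M : ℝ} (hε : 0 < ε) (hη : 0 < η) (hM : 0 < M) :
    ∃ R : ℕ, 0 < R ∧ ∃ N0 : ℕ, ∀ n : ℕ, N0 ≤ n → ∀ x y : ℤ, x ≤ y →
      |(y : ℝ) - x - p * n| ≤ M * √n →
      ((badP p n R (ε * √n) x y).ncard : ℝ) ≤ η * (OmegaPath 0 n x y).ncard := by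
  obtain ⟨R, hR, N0, H⟩ := modB hp hε hη hM
  refine ⟨R, hR, N0, ?_⟩
  intro n hn x y hxy hb
  obtain ⟨μ, hμ, hX⟩ := exists_geo p hp
  have hm : (((y - x).toNat : ℕ) : ℝ) = y - x := by
    have : (((y - x).toNat : ℤ) : ℝ) = ((y - x : ℤ) : ℝ) := by rw [Int.toNat_of_nonneg (by omega)]
    push_cast at this
    exact_mod_cast this
  have h1 := H _ μ Xc hX n hn (y - x).toNat (by rw [hm]; exact hb)
  have e1 : {ω | Sm Xc n ω = (y - x).toNat} = {ω | pth x n ω ∈ OmegaPath 0 n x y} := by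
    ext ω; exact (pth_mem_iff hxy ω).symm
  have e2 : {ω | pth x n ω ∈ badP p n R (ε * √n) x y} ⊆
      badEv p Xc n R (ε * √n) ∩ {ω | Sm Xc n ω = (y - x).toNat} := by
    rintro ω ⟨h2, j, hj, t, ht, hlt⟩
    refine ⟨⟨j, hj, t, ht, ?_⟩, (pth_mem_iff hxy ω).mp h2⟩
    have hg : gridPt n R j ≤ n := min_le_right _ _
    have ht2 := ht.trans (min_le_right _ _)
    rw [pth_nat _ _ _ hg, pth_nat _ _ _ (by omega), Sm_add] at hlt
    push_cast at hlt
    rw [Zc]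
    convert hlt using 2
    ring
  have h3 := (mreal_mono (μ := μ) e2).trans h1
  rw [e1, cnt hX (fun L hL => hL.1), cnt hX subset_rfl, ← mul_assoc] at h3
  exact le_of_mul_le_mul_right h3 (by unfold kap; positivity)

lemma corrCount {p : ℝ} (hp : 0 < p) {K a : ℝ} (hK : 0 < K) (ha : 0 < a) :
    ∃ c : ℝ, 0 < c ∧ ∃ N0 : ℕ, ∀ n : ℕ, N0 ≤ n → ∀ x y : ℤ, x ≤ y →
    ∀ ψ : ℕ → ℝ, ψ 0 = 0 → (∀ u v : ℕ, |ψ (u + v) - ψ u| ≤ K * v / √n) →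
      (y : ℝ) - x = p * n + ψ n →
    c * (OmegaPath 0 n x y).ncard ≤
      ({L | L ∈ OmegaPath 0 n x y ∧
        ∀ t : ℕ, t ≤ n → |(L t : ℝ) - x - p * t - ψ t| ≤ a * √n}.ncard : ℝ) := by
  obtain ⟨c, hc, N0, H⟩ := corr hp hK ha
  refine ⟨c, hc, N0, ?_⟩
  intro n hn x y hxy ψ h0 hlip hend
  obtain ⟨μ, hμ, hX⟩ := exists_geo p hp
  have hm : (((y - x).toNat : ℕ) : ℝ) = y - x := by
    have : (((y - x).toNat : ℤ) : ℝ) = ((y - x : ℤ) : ℝ) := by rw [Int.toNat_of_nonneg (by omega)]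
    push_cast at this
    exact_mod_cast this
  have h1 := H _ μ Xc hX n hn ψ h0 hlip (y - x).toNat (by rw [hm]; exact hend)
  have e1 : {ω | Sm Xc n ω = (y - x).toNat} = {ω | pth x n ω ∈ OmegaPath 0 n x y} := by
    ext ω; exact (pth_mem_iff hxy ω).symm
  have e2 : {ω | Sm Xc n ω = (y - x).toNat ∧ ∀ t ≤ n, |Zc p Xc t ω - ψ t| ≤ a * √n} ⊆
      {ω | pth x n ω ∈ {L | L ∈ OmegaPath 0 n x y ∧
        ∀ t : ℕ, t ≤ n → |(L t : ℝ) - x - p * t - ψ t| ≤ a * √n}} := by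
    rintro ω ⟨h2, h3⟩
    refine ⟨(pth_mem_iff hxy ω).mpr h2, ?_⟩
    intro t ht
    rw [pth_nat _ _ _ ht]
    have := h3 t ht
    rw [Zc] at this
    push_cast
    convert this using 2
    ring
  have h3 := h1.trans (mreal_mono (μ := μ) e2)
  rw [e1, cnt hX subset_rfl, cnt hX (fun L hL => hL.1), ← mul_assoc] at h3
  exact le_of_mul_le_mul_right h3 (by unfold kap; positivity)


lemma interp_near (F : ℤ → ℝ) (A B : ℤ) (c b : ℝ)
    (hF : ∀ s, A ≤ s → s ≤ B → |F s - c| ≤ b) (u : ℝ) (h1 : (A : ℝ) ≤ u) (h2 : u ≤ B) :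
    |interp F u - c| ≤ b := by
  have hA : A ≤ ⌊u⌋ := Int.le_floor.mpr h1
  rcases h2.lt_or_eq with h | h
  · have hB : ⌊u⌋ < B := Int.floor_lt.mpr h
    have e1 := hF ⌊u⌋ hA hB.le
    have e2 := hF (⌊u⌋ + 1) (by omega) (by omega)
    have f1 := Int.floor_le u
    have f2 := Int.lt_floor_add_one u
    unfold interp
    rw [abs_le] at *
    constructor <;> nlinarith
  · have : ⌊u⌋ = B := by rw [h]; simp
    unfold interp
    rw [this, h]
    simpa using hF B (by omega) le_rfl

lemma find_block (n R : ℕ) (u : ℝ) (h0 : 0 ≤ u) (m : ℕ) (hm : 0 < m) (hu : u ≤ gridPt n R m) :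
    ∃ j < m, (gridPt n R j : ℝ) ≤ u ∧ u ≤ gridPt n R (j + 1) := by
  induction m with
  | zero => omega
  | succ m ih =>
    rcases le_total (gridPt n R m : ℝ) u with h | h
    · exact ⟨m, by omega, h, hu⟩
    · rcases Nat.eq_zero_or_pos m with rfl | hpos
      · exact ⟨0, by omega, by simp [gridPt, h0], hu⟩
      · obtain ⟨j, hj, hh⟩ := ih hpos h
        exact ⟨j, by omega, hh⟩

lemma grid_succ (n R j : ℕ) : gridPt n R j ≤ gridPt n R (j + 1) ∧
    gridPt n R (j + 1) ≤ gridPt n R j + (n / R + 1) ∧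
    (gridPt n R (j + 1) < n → gridPt n R (j + 1) = (j + 1) * (n / R + 1)) := by
  unfold gridPt
  rw [add_mul, one_mul]
  generalize n / R + 1 = D
  generalize j * D = A
  omega

lemma osc {p : ℝ} {n R : ℕ} {b : ℝ} {x y : ℤ} {L : ℤ → ℤ} (hR : 0 < R)
    (hL : L ∈ OmegaPath 0 n x y) (hb : L ∉ badP p n R b x y) (u v : ℝ) (hu : 0 ≤ u)
    (huv : u ≤ v) (hv : v ≤ n) (hd : v - u ≤ n / R) :
    |(interpZ L v - p * v) - (interpZ L u - p * u)| ≤ 3 * b := by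
  set D := n / R + 1 with hD
  have hDlt : (n : ℝ) / R < D := by
    rw [div_lt_iff₀ (by exact_mod_cast hR)]
    have := Nat.lt_div_mul_add hR (a := n)
    have h2 : n < D * R := by rw [hD]; nlinarith
    exact_mod_cast h2
  have hRD : n ≤ R * D := by
    have := Nat.lt_div_mul_add hR (a := n)
    rw [hD]; nlinarith
  have hgR : gridPt n R R = n := min_eq_right hRD
  set F : ℤ → ℝ := fun s => (L s : ℝ) - p * s with hF
  have hIntg : ∀ w, interpZ L w - p * w = interp F w := by
    intro w
    simp only [interpZ, interp, hF]
    push_cast; ring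
  rw [hIntg, hIntg]
  have hblock : ∀ j < R, ∀ s : ℤ, (gridPt n R j : ℤ) ≤ s → s ≤ (gridPt n R (j + 1) : ℕ) →
      |F s - F (gridPt n R j : ℕ)| ≤ b := by
    intro j hj s h1 h2
    by_contra hcon
    push Not at hcon
    apply hb
    obtain ⟨t, ht⟩ := Int.le.dest h1
    refine ⟨hL, j, hj, t, ?_, ?_⟩
    · have h3 : gridPt n R j + t ≤ gridPt n R (j + 1) := by
        rw [← ht] at h2; exact_mod_cast h2
      have h4 : gridPt n R (j + 1) ≤ n := min_le_right _ _
      have h5 : gridPt n R (j + 1) ≤ gridPt n R j + D := (grid_succ n R j).2.1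
      rw [le_min_iff]
      omega
    · rw [← ht] at hcon
      simp only [hF] at hcon
      push_cast at hcon ⊢
      refine lt_of_lt_of_eq hcon ?_
      congr 1
      ring
  have hreal : ∀ j < R, ∀ w : ℝ, (gridPt n R j : ℝ) ≤ w → w ≤ gridPt n R (j + 1) →
      |interp F w - F (gridPt n R j : ℕ)| ≤ b := by
    intro j hj w h1 h2
    exact interp_near F (gridPt n R j : ℕ) (gridPt n R (j + 1) : ℕ) _ _ (hblock j hj) w
      (by exact_mod_cast h1) (by exact_mod_cast h2)
  obtain ⟨j, hj, j1, j2⟩ := find_block n R u hu R hR (by rw [hgR]; linarith)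
  have k1 := hreal j hj u j1 j2
  have hb0 : 0 ≤ b := (abs_nonneg _).trans k1
  rcases le_total v (gridPt n R (j + 1)) with h | h
  · have k2 := hreal j hj v (by linarith) h
    rw [abs_le] at *
    constructor <;> linarith
  · have hmono : gridPt n R j ≤ gridPt n R (j + 1) := (grid_succ n R j).1
    have k3 := hblock j hj (gridPt n R (j + 1) : ℕ) (by exact_mod_cast hmono) le_rfl
    rcases h.lt_or_eq with h | h
    · have hlt : gridPt n R (j + 1) < n := by
        have : (gridPt n R (j + 1) : ℝ) < n := by linarith
        exact_mod_cast this
      have hj1 : j + 1 < R := by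
        by_contra hcon
        have : j + 1 = R := by omega
        rw [this, hgR] at hlt
        omega
      have hgv : gridPt n R (j + 1) = (j + 1) * D := (grid_succ n R j).2.2 hlt
      have hv2 : v ≤ gridPt n R (j + 1 + 1) := by
        unfold gridPt
        rw [Nat.cast_min, le_min_iff]
        refine ⟨?_, hv⟩
        rw [hgv] at j2
        push_cast at j2 hDlt ⊢
        rw [hD] at j2 hDlt
        push_cast at j2 hDlt
        linarith
      have k2 := hreal (j + 1) hj1 v h.le hv2
      rw [abs_le] at *
      constructor <;> linarith
    · have k2 := hreal j hj v (by linarith) h.ge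
      rw [abs_le] at *
      constructor <;> linarith

lemma modCont_good {p : ℝ} (hp : 0 < p) {ε : ℝ} (hε : 0 < ε) {n R : ℕ} (hn : 0 < n) {x y : ℤ}
    {L : ℤ → ℤ} (hR : 0 < R) (hL : L ∈ OmegaPath 0 n x y)
    (hb : L ∉ badP p n R (ε * √(p * (1 + p)) / 3 * √n) x y) :
    modCont (fun t => (√(p * (1 + p)))⁻¹ * (√n)⁻¹ * (interpZ L (t * n) - p * t * n))
      0 1 (1 / R) ≤ ε := by
  have hn0 : (0 : ℝ) < n := by exact_mod_cast hn
  have hsn : 0 < √(n : ℝ) := Real.sqrt_pos.mpr hn0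
  have hsp : 0 < √(p * (1 + p)) := Real.sqrt_pos.mpr (by positivity)
  have key : ∀ s t : ℝ, 0 ≤ s → s ≤ t → t ≤ 1 → t - s ≤ 1 / R →
      |(√(p * (1 + p)))⁻¹ * (√n)⁻¹ * (interpZ L (t * n) - p * t * n) -
        (√(p * (1 + p)))⁻¹ * (√n)⁻¹ * (interpZ L (s * n) - p * s * n)| ≤ ε := by
    intro s t h1 h2 h3 h4
    have h := osc hR hL hb (s * n) (t * n) (by positivity) (by gcongr) (by nlinarith)
      (by rw [← sub_mul]
          calc (t - s) * n ≤ 1 / R * n := by gcongr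
            _ = n / R := by ring)
    rw [← mul_sub, abs_mul, abs_of_pos (by positivity)]
    rw [← mul_assoc, ← mul_assoc] at h
    calc _ ≤ (√(p * (1 + p)))⁻¹ * (√n)⁻¹ * (3 * (ε * √(p * (1 + p)) / 3 * √n)) := by
          apply mul_le_mul_of_nonneg_left h (by positivity)
      _ = ε := by field_simp
  apply Real.sSup_le _ hε.le
  rintro w ⟨s, hs, t, ht, hd, rfl⟩
  rw [abs_le] at hd
  rcases le_total s t with h | h
  · rw [abs_sub_comm]; exact key s t hs.1 h ht.2 (by linarith)
  · exact key t s ht.1 h hs.2 (by linarith)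

/-- the centering curve -/
noncomputable def psi (p B : ℝ) (n : ℕ) (x y : ℤ) (t : ℕ) : ℝ :=
  (t / n : ℝ) * (y - p * n - x) + B * √n * min (t / n : ℝ) (1 - t / n)

lemma psi_zero (p B : ℝ) (n : ℕ) (x y : ℤ) : psi p B n x y 0 = 0 := by
  simp [psi]

lemma psi_end (p B : ℝ) {n : ℕ} (hn : 0 < n) (x y : ℤ) :
    (y : ℝ) - x = p * n + psi p B n x y n := by
  have hn0 : (n : ℝ) ≠ 0 := by positivity
  simp [psi, hn0]
  ring

lemma psi_lip {p B M : ℝ} (hB : 0 ≤ B) {n : ℕ} (hn : 0 < n) {x y : ℤ}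
    (hx : |(x : ℝ)| ≤ M * √n) (hy : |(y : ℝ) - p * n| ≤ M * √n) (u v : ℕ) :
    |psi p B n x y (u + v) - psi p B n x y u| ≤ (2 * M + B) * v / √n := by
  have hn0 : (0 : ℝ) < n := by exact_mod_cast hn
  have hsn : 0 < √(n : ℝ) := Real.sqrt_pos.mpr hn0
  have hmin : ∀ a d : ℝ, 0 ≤ d → |min (a + d) (1 - (a + d)) - min a (1 - a)| ≤ d := by
    intro a d hd
    rw [abs_le]
    rcases le_total (a + d) (1 - (a + d)) with h | h <;>
    rcases le_total a (1 - a) with h' | h' <;>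
    simp only [min_eq_left, min_eq_right, h, h'] <;> constructor <;> linarith
  have h1 := hmin (u / n) (v / n) (by positivity)
  have e : (((u + v : ℕ) : ℝ) / n) = u / n + v / n := by push_cast; ring
  have e2 : (2 * M + B) * v / √n = (v / n : ℝ) * (2 * M * √n) + B * √n * (v / n) := by
    have := Real.mul_self_sqrt hn0.le
    field_simp
    rw [pow_two, this]
  unfold psi
  rw [e, e2]
  have e3 : (u / n + v / n) * ((y : ℝ) - p * n - x) + B * √n * min (u / n + v / n : ℝ) (1 - (u / n + v / n)) -
      (u / n * (y - p * n - x) + B * √n * min (u / n : ℝ) (1 - u / n)) =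
      v / n * (y - p * n - x) + B * √n * (min (u / n + v / n : ℝ) (1 - (u / n + v / n)) - min (u / n : ℝ) (1 - u / n)) := by ring
  rw [e3]
  refine (abs_add_le _ _).trans ?_
  rw [abs_mul, abs_mul, abs_of_nonneg (show (0:ℝ) ≤ v / n by positivity),
    abs_of_nonneg (show 0 ≤ B * √n by positivity)]
  apply add_le_add
  · apply mul_le_mul_of_nonneg_left _ (by positivity)
    rw [abs_le] at *
    constructor <;> linarith
  · exact mul_le_mul_of_nonneg_left h1 (by positivity)

/-- the corridor -/
def corrP (p B a : ℝ) (n : ℕ) (x y : ℤ) : Set (ℤ → ℤ) :=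
  {L | L ∈ OmegaPath 0 n x y ∧
        ∀ t : ℕ, t ≤ n → |(L t : ℝ) - x - p * t - psi p B n x y t| ≤ a * √n}


lemma omegaPath_le {n : ℕ} {x y : ℤ} {L : ℤ → ℤ} (hL : L ∈ OmegaPath 0 n x y) : x ≤ y := by
  obtain ⟨h1, h2, h3⟩ := hL
  have h5 := congrFun (pth_surj h1 h2) n
  rw [pth_nat _ _ _ le_rfl, h3] at h5
  omega

set_option maxHeartbeats 4000000 in
lemma corr_sub {p Mbot Mside Asep Agap Δ : ℝ} (hp : 0 < p) (hMbot : 0 < Mbot) (hM : 0 < Mside)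
    (hAsep : 0 < Asep) (hAgap : 0 < Agap) (hΔ : 0 < Δ) (hΔ2 : Δ < 1 / 2)
    {k : ℕ} (hk : 0 < k) {B a K : ℝ} (hB : B = 2 * Mside + (Mside + Mbot + Agap) / Δ)
    (hK : K = 2 * Mside + B) (ha1 : a ≤ Asep / 4) (ha2 : a ≤ Agap / 4)
    {n : ℕ} (hn : 1 ≤ n) (hn1 : 2 * (p + K) / Asep ≤ √n) (hn2 : 2 * (p + K) / Agap ≤ √n)
    {x y : Fin k → ℤ}
    (hx : ∀ i, |(x i : ℝ)| ≤ Mside * √n) (hy : ∀ i, |(y i : ℝ) - p * n| ≤ Mside * √n)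
    (hxs : ∀ i j : Fin k, (j : ℕ) = (i : ℕ) + 1 → Asep * √n ≤ (x i : ℝ) - x j)
    (hys : ∀ i j : Fin k, (j : ℕ) = (i : ℕ) + 1 → Asep * √n ≤ (y i : ℝ) - y j)
    {g : ℤ → EReal}
    (hg1 : ∀ s : ℤ, 0 ≤ s → s ≤ n → g s ≤ ((p * s + Mbot * √n : ℝ) : EReal))
    (hg2 : ∀ s : ℤ, 0 ≤ s → (s : ℝ) ≤ Δ * n →
          g s ≤ (((x ⟨k - 1, Nat.sub_lt hk Nat.one_pos⟩ : ℝ)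
            + p * s - Agap * √n : ℝ) : EReal))
    (hg3 : ∀ s : ℤ, (n : ℝ) - Δ * n ≤ (s : ℝ) → s ≤ n →
          g s ≤ (((y ⟨k - 1, Nat.sub_lt hk Nat.one_pos⟩ : ℝ) - p * n
            + p * s - Agap * √n : ℝ) : EReal))
    {Q : Fin k → ℤ → ℤ} (hQ : ∀ i, Q i ∈ corrP p B a n (x i) (y i)) :
    Q ∈ OmegaInter 0 n x y (fun _ => (⊤ : EReal)) g := by
  have hn0 : (0 : ℝ) < n := by exact_mod_cast hn
  have hsn : 0 < √(n : ℝ) := Real.sqrt_pos.mpr hn0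
  have hsn1 : 1 ≤ √(n : ℝ) := Real.one_le_sqrt.mpr (by exact_mod_cast hn)
  have hB0 : 2 * Mside ≤ B := by
    have : 0 ≤ (Mside + Mbot + Agap) / Δ := by positivity
    linarith
  have hBΔ : Mside + Mbot + Agap ≤ B * Δ := by
    have : (Mside + Mbot + Agap) / Δ * Δ = Mside + Mbot + Agap := by field_simp
    rw [hB]; nlinarith
  have hK0 : 0 < K := by linarith
  rw [div_le_iff₀ hAsep] at hn1
  rw [div_le_iff₀ hAgap] at hn2
  refine ⟨fun i => (hQ i).1.1, fun i => (hQ i).1.2.1, fun i => (hQ i).1.2.2, ?_⟩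
  intro r hr0 hrn
  lift r to ℕ using hr0.le
  have hr0' : 0 < r := by exact_mod_cast hr0
  have hrn' : r ≤ n := by exact_mod_cast hrn
  obtain ⟨s, rfl⟩ : ∃ s, r = s + 1 := ⟨r - 1, by omega⟩
  have es : ((s + 1 : ℕ) : ℤ) - 1 = (s : ℕ) := by push_cast; ring
  rw [es]
  set τ : ℝ := ((s + 1 : ℕ) : ℝ) / n with hτ
  have hτ0 : 0 ≤ τ := by positivity
  have hτ1 : τ ≤ 1 := by rw [hτ, div_le_one hn0]; exact_mod_cast hrn'
  have lower : ∀ i, p * (s + 1 : ℕ) + (x i + psi p B n (x i) (y i) (s + 1)) - (p + K) - a * √n ≤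
      (Q i (s : ℕ) : ℝ) := by
    intro i
    have h1 := (hQ i).2 s (by omega)
    have h2 := psi_lip (p := p) (B := B) (M := Mside) (by linarith) hn (hx i) (hy i) s 1
    have h3 : (2 * Mside + B) * ((1 : ℕ) : ℝ) / √n ≤ K := by
      rw [div_le_iff₀ hsn, hK]; push_cast; nlinarith
    rw [abs_le] at h1 h2
    push_cast
    linarith
  refine ⟨fun i _ => le_top, ?_, ?_⟩
  · intro i j hij
    have h1 := lower i
    have h2 := (hQ j).2 (s + 1) hrn'
    rw [abs_le] at h2
    have h3 : Asep * √n ≤ (x i + psi p B n (x i) (y i) (s + 1)) -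
        (x j + psi p B n (x j) (y j) (s + 1)) := by
      unfold psi
      rw [← hτ]
      have a1 := hxs i j hij
      have a2 := hys i j hij
      nlinarith
    have h4 : (Q j ((s + 1 : ℕ) : ℤ) : ℝ) ≤ Q i (s : ℕ) := by
      nlinarith
    exact_mod_cast h4
  · intro i hi
    have hi' : i = ⟨k - 1, Nat.sub_lt hk Nat.one_pos⟩ := Fin.ext hi
    have h1 := lower i
    have hxi := hx i
    have hyi := hy i
    rw [abs_le] at hxi hyi
    have hps : psi p B n (x i) (y i) (s + 1) =
      τ * (y i - p * n - x i) + B * √n * min τ (1 - τ) := rfl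
    have hτn : τ * n = (s + 1 : ℕ) := by rw [hτ]; field_simp
    have hgb : ∀ V : ℝ, g ((s + 1 : ℕ) : ℤ) ≤ (V : EReal) →
        V ≤ p * (s + 1 : ℕ) + (x i + psi p B n (x i) (y i) (s + 1)) - Agap * √n →
        g ((s + 1 : ℕ) : ℤ) ≤ ((Q i (s : ℕ) : ℝ) : EReal) := by
      intro V hV1 hV2
      refine hV1.trans (EReal.coe_le_coe_iff.mpr ?_)
      nlinarith
    rcases le_or_gt τ Δ with hc | hc
    · refine hgb _ (hg2 _ (by positivity) ?_) ?_
      · have : ((s + 1 : ℕ) : ℝ) ≤ Δ * n := by rw [← hτn]; gcongr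
        exact_mod_cast this
      · rw [← hi', hps, min_eq_left (by linarith)]
        have : 0 ≤ τ * ((y i - p * n - x i) + B * √n) := by
          apply mul_nonneg hτ0; nlinarith
        push_cast
        nlinarith
    · rcases le_or_gt (1 - Δ) τ with hc' | hc'
      · refine hgb _ (hg3 _ ?_ hrn) ?_
        · have : (n : ℝ) - Δ * n ≤ ((s + 1 : ℕ) : ℝ) := by rw [← hτn]; nlinarith
          exact_mod_cast this
        · rw [← hi', hps, min_eq_right (by linarith)]
          have : 0 ≤ (1 - τ) * ((x i - (y i - p * n)) + B * √n) := by
            apply mul_nonneg (by linarith); nlinarith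
          push_cast
          nlinarith
      · refine hgb _ (hg1 _ (by positivity) hrn) ?_
        rw [hps]
        have hm : Δ ≤ min τ (1 - τ) := le_min hc.le (by linarith)
        have m1 : B * √n * Δ ≤ B * √n * min τ (1 - τ) := by
          apply mul_le_mul_of_nonneg_left hm
          have : 0 ≤ B := by linarith
          positivity
        have m2 : (Mside + Mbot + Agap) * √n ≤ B * Δ * √n := by gcongr
        have m3 : -(Mside * √n) ≤ (1 - τ) * x i + τ * (y i - p * n) := by nlinarith
        push_cast
        nlinarith

set_option maxHeartbeats 4000000

/-- (Lemma 4.3, modulus of continuity for several interlacing curves.) If the boundary data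
of an interlacing ensemble is well-behaved and well-separated, every rescaled curve has a
well-behaved modulus of continuity. -/
theorem modulus_several_curves
    (p ε η Mbot Mside Asep Agap : ℝ)
    (hp : 0 < p) (hε : 0 < ε) (hη : 0 < η) (hMbot : 0 < Mbot) (hMside : 0 < Mside)
    (hAsep : 0 < Asep) (hAgap : 0 < Agap)
    (Δgap : ℝ) (hΔgap : Δgap ∈ Set.Ioo (0 : ℝ) (1 / 2)) (k : ℕ) (hk : 0 < k) :
    ∃ (N6 : ℕ) (δ : ℝ), 0 < δ ∧
      ∀ n : ℕ, N6 ≤ n →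
      ∀ x y : Fin k → ℤ,
        (∀ i j : Fin k, i ≤ j → x j ≤ x i) → (∀ i j : Fin k, i ≤ j → y j ≤ y i) →
        (∀ i, |(x i : ℝ)| ≤ Mside * Real.sqrt n) →
        (∀ i, |(y i : ℝ) - p * n| ≤ Mside * Real.sqrt n) →
        (∀ i j : Fin k, (j : ℕ) = (i : ℕ) + 1 → Asep * Real.sqrt n ≤ (x i : ℝ) - x j) →
        (∀ i j : Fin k, (j : ℕ) = (i : ℕ) + 1 → Asep * Real.sqrt n ≤ (y i : ℝ) - y j) →
      ∀ g : ℤ → EReal, (∀ s : ℤ, 0 ≤ s → s ≤ n → g s ≠ ⊤) →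
        (∀ s : ℤ, 0 ≤ s → s ≤ n →
          g s ≤ ((p * s + Mbot * Real.sqrt n : ℝ) : EReal)) →
        (∀ s : ℤ, 0 ≤ s → (s : ℝ) ≤ Δgap * n →
          g s ≤ (((x ⟨k - 1, Nat.sub_lt hk Nat.one_pos⟩ : ℝ)
            + p * s - Agap * Real.sqrt n : ℝ) : EReal)) →
        (∀ s : ℤ, (n : ℝ) - Δgap * n ≤ (s : ℝ) → s ≤ n →
          g s ≤ (((y ⟨k - 1, Nat.sub_lt hk Nat.one_pos⟩ : ℝ) - p * n
            + p * s - Agap * Real.sqrt n : ℝ) : EReal)) →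
        (OmegaInter 0 n x y (fun _ => (⊤ : EReal)) g).Nonempty →
      ∀ (Ω : Type) (_ : MeasurableSpace Ω) (P : Measure Ω), IsProbabilityMeasure P →
      ∀ Q : Ω → Fin k → ℤ → ℤ,
        UniformOn P Q (OmegaInter 0 n x y (fun _ => (⊤ : EReal)) g) →
      ∀ i : Fin k,
        P {ω | ε < modCont (fun t => (Real.sqrt (p * (1 + p)))⁻¹ * (Real.sqrt n)⁻¹ *
            (interpZ (Q ω i) (t * n) - p * t * n)) 0 1 δ} < ENNReal.ofReal η := by
  obtain ⟨hΔ, hΔ2⟩ := hΔgap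
  set B : ℝ := 2 * Mside + (Mside + Mbot + Agap) / Δgap with hB
  have hB0 : 0 < B := by positivity
  set K : ℝ := 2 * Mside + B with hK
  have hK0 : 0 < K := by positivity
  set a : ℝ := min (Asep / 4) (Agap / 4) with ha
  have ha0 : 0 < a := by positivity
  have hσ : 0 < Real.sqrt (p * (1 + p)) := Real.sqrt_pos.mpr (by positivity)
  obtain ⟨c, hc, N1, hcorr⟩ := corrCount hp hK0 ha0
  obtain ⟨R, hR, N2, hbad⟩ := badCount hp (ε := ε * Real.sqrt (p * (1 + p)) / 3)
    (η := η * c ^ k / 2) (M := 2 * Mside) (by positivity) (by positivity) (by positivity)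
  obtain ⟨N3, hN31, hN3⟩ := sqrt_large (2 * (p + K) / Asep)
  obtain ⟨N4, hN41, hN4⟩ := sqrt_large (2 * (p + K) / Agap)
  have hRr : (0 : ℝ) < R := by exact_mod_cast hR
  refine ⟨N1 + N2 + N3 + N4 + 1, 1 / R, by positivity, ?_⟩
  intro n hn x y hxo hyo hx hy hxs hys g hgtop hg1 hg2 hg3 hne Ω _ P hP Q hU i
  set S := OmegaInter 0 n x y (fun _ => (⊤ : EReal)) g with hS
  have hSp : ∀ q ∈ S, ∀ j, q j ∈ OmegaPath 0 n (x j) (y j) :=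
    fun q hq j => ⟨hq.1 j, hq.2.1 j, hq.2.2.1 j⟩
  have hxy : ∀ j, x j ≤ y j := by
    obtain ⟨q, hq⟩ := hne
    exact fun j => omegaPath_le (hSp q hq j)
  classical
  set T : Fin k → Finset (ℤ → ℤ) := fun j => (omegaPath_finite n (x j) (y j)).toFinset with hT
  have hCf : ∀ j, (corrP p B a n (x j) (y j)).Finite := fun j =>
    (omegaPath_finite n (x j) (y j)).subset (fun L hL => hL.1)
  set C : Fin k → Finset (ℤ → ℤ) := fun j => (hCf j).toFinset with hC
  have hBf : (badP p n R (ε * Real.sqrt (p * (1 + p)) / 3 * Real.sqrt n) (x i) (y i)).Finite :=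
    (omegaPath_finite n (x i) (y i)).subset (fun L hL => hL.1)
  set Bd : Finset (ℤ → ℤ) := hBf.toFinset with hBd
  have hSsub : S ⊆ (Fintype.piFinset T : Set (Fin k → ℤ → ℤ)) := by
    intro q hq
    simp only [Finset.mem_coe, Fintype.mem_piFinset, hT, Set.Finite.mem_toFinset]
    exact hSp q hq
  have hSf : S.Finite := (Finset.finite_toSet _).subset hSsub
  -- counting
  have cardT : ∀ j, ((T j).card : ℝ) = (OmegaPath 0 n (x j) (y j)).ncard := by
    intro j; rw [Set.ncard_eq_toFinset_card _ (omegaPath_finite n (x j) (y j))]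
  have cardC : ∀ j, c * ((T j).card : ℝ) ≤ (C j).card := by
    intro j
    rw [cardT]
    have h1 := hcorr n (by omega) (x j) (y j) (hxy j) (psi p B n (x j) (y j)) (psi_zero _ _ _ _ _)
      (psi_lip hB0.le (by omega) (hx j) (hy j)) (psi_end p B (by omega) _ _)
    have h2 : (C j).card = (corrP p B a n (x j) (y j)).ncard :=
      (Set.ncard_eq_toFinset_card _ (hCf j)).symm
    rw [h2]
    exact h1
  have cardB : (Bd.card : ℝ) ≤ η * c ^ k / 2 * (T i).card := by
    rw [cardT]
    have h1 := hbad n (by omega) (x i) (y i) (hxy i) (by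
      have a1 := hx i
      have a2 := hy i
      rw [abs_le] at *
      constructor <;> linarith)
    rwa [Set.ncard_eq_toFinset_card _ hBf] at h1
  set Pi : ℝ := ∏ j, ((T j).card : ℝ) with hPi
  have hScard : c ^ k * Pi ≤ (Nat.card S : ℝ) := by
    have h1 : ((Fintype.piFinset C : Finset _) : Set (Fin k → ℤ → ℤ)) ⊆ S := by
      intro q hq
      simp only [Finset.mem_coe, Fintype.mem_piFinset, hC, Set.Finite.mem_toFinset] at hq
      exact corr_sub hp hMbot hMside hAsep hAgap hΔ hΔ2 hk hB hK (min_le_left _ _)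
        (min_le_right _ _) (by omega) (hN3 n (by omega)) (hN4 n (by omega)) hx hy hxs hys
        hg1 hg2 hg3 hq
    have h2 := Set.ncard_le_ncard h1 hSf
    rw [Set.ncard_coe_finset, Fintype.card_piFinset] at h2
    rw [Nat.card_coe_set_eq]
    calc c ^ k * Pi = ∏ j, (c * ((T j).card : ℝ)) := by
          rw [Finset.prod_mul_distrib]; simp [hPi]
      _ ≤ ∏ j, ((C j).card : ℝ) := by
          apply Finset.prod_le_prod
          · intro j _; positivity
          · intro j _; exact cardC j
      _ ≤ S.ncard := by exact_mod_cast h2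
  set F : Finset (Fin k → ℤ → ℤ) :=
    (Fintype.piFinset (Function.update T i Bd)).filter (fun q => q ∈ S) with hF
  have hFcard : (F.card : ℝ) ≤ η / 2 * (Nat.card S : ℝ) := by
    have h1 : F.card ≤ (Fintype.piFinset (Function.update T i Bd)).card := Finset.card_filter_le _ _
    rw [Fintype.card_piFinset] at h1
    have h2 : ∏ j, (((Function.update T i Bd) j).card : ℝ) =
        (Bd.card : ℝ) * ∏ j ∈ Finset.univ.erase i, ((T j).card : ℝ) := by
      rw [← Finset.mul_prod_erase _ _ (Finset.mem_univ i)]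
      rw [Function.update_self]
      congr 1
      apply Finset.prod_congr rfl
      intro j hj
      rw [Function.update_of_ne (Finset.ne_of_mem_erase hj)]
    have h3 : Pi = ((T i).card : ℝ) * ∏ j ∈ Finset.univ.erase i, ((T j).card : ℝ) :=
      (Finset.mul_prod_erase _ _ (Finset.mem_univ i)).symm
    calc (F.card : ℝ) ≤ ∏ j, (((Function.update T i Bd) j).card : ℝ) := by exact_mod_cast h1
      _ = _ := h2
      _ ≤ (η * c ^ k / 2 * (T i).card) * ∏ j ∈ Finset.univ.erase i, ((T j).card : ℝ) := by
          apply mul_le_mul_of_nonneg_right cardB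
          exact Finset.prod_nonneg (fun _ _ => Nat.cast_nonneg _)
      _ = η / 2 * (c ^ k * Pi) := by rw [h3]; ring
      _ ≤ _ := mul_le_mul_of_nonneg_left hScard (half_pos hη).le
  have hcov : {ω | ε < modCont (fun t => (Real.sqrt (p * (1 + p)))⁻¹ * (Real.sqrt n)⁻¹ *
            (interpZ (Q ω i) (t * n) - p * t * n)) 0 1 (1 / R)} ⊆
      ⋃ q ∈ F, {ω | Q ω = q} := by
    intro ω hω
    have hω' : ε < modCont (fun t => (Real.sqrt (p * (1 + p)))⁻¹ * (Real.sqrt n)⁻¹ *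
            (interpZ (Q ω i) (t * n) - p * t * n)) 0 1 (1 / R) := hω
    have hQS := hU.1 ω
    simp only [Set.mem_iUnion]
    refine ⟨Q ω, ?_, rfl⟩
    rw [hF, Finset.mem_filter]
    refine ⟨?_, hQS⟩
    rw [Fintype.mem_piFinset]
    intro j
    by_cases hj : j = i
    · subst hj
      rw [Function.update_self, hBd, Set.Finite.mem_toFinset]
      by_contra hcon
      exact absurd (modCont_good hp hε (by omega) hR (hSp _ hQS j) hcon) (not_le.mpr hω')
    · rw [Function.update_of_ne hj]
      simp only [hT, Set.Finite.mem_toFinset]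
      exact hSp _ hQS j
  have hSpos : 0 < Nat.card S := by
    rw [Nat.card_coe_set_eq, Set.ncard_pos hSf]; exact hne
  have hSr : (0 : ℝ) < (Nat.card S : ℝ) := by exact_mod_cast hSpos
  calc _ ≤ P (⋃ q ∈ F, {ω | Q ω = q}) := measure_mono hcov
    _ ≤ ∑ q ∈ F, P {ω | Q ω = q} := measure_biUnion_finset_le _ _
    _ = ∑ q ∈ F, ((Nat.card S : ℝ≥0∞))⁻¹ :=
        Finset.sum_congr rfl (fun q hq => hU.2 q (Finset.mem_filter.mp hq).2)
    _ = (F.card : ℝ≥0∞) * ((Nat.card S : ℝ≥0∞))⁻¹ := by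
        rw [Finset.sum_const, nsmul_eq_mul]
    _ = ENNReal.ofReal ((F.card : ℝ) / (Nat.card S : ℝ)) := by
        rw [ENNReal.ofReal_div_of_pos hSr, ENNReal.ofReal_natCast, ENNReal.ofReal_natCast,
          div_eq_mul_inv]
    _ ≤ ENNReal.ofReal (η / 2) := by
        apply ENNReal.ofReal_le_ofReal
        rw [div_le_iff₀ hSr]; exact hFcard
    _ < ENNReal.ofReal η := by
        rw [ENNReal.ofReal_lt_ofReal_iff hη]; linarith
end

section
/- (Maximal interlacing configuration; Step 1 of the proof of Lemma 2.6.) Let k ∈ ℕ, T0 < T1 be integers, x⃗, y⃗ ∈ 𝔚_k, and g : ⟦T0,T1⟧ → [−∞,∞), and assume Ω_Inter(T0,T1,x⃗,y⃗,∞,g) ≠ ∅. Define Q_i^max(T0 + s) = min(x_{i−s}, y_i) for s ∈ ⟦0, T1−T0⟧ and i ∈ ⟦1,k⟧, with the convention x_m = +∞ for m ≤ 0 (so Q_i^max(T0+s) = y_i when s ≥ i). Then 𝔔^max = (Q_1^max, …, Q_k^max) ∈ Ω_Inter(T0,T1,x⃗,y⃗,∞,g), and for every 𝔔 = (Q_1,…,Q_k)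 ∈ Ω_Inter(T0,T1,x⃗,y⃗,∞,g) one has Q_i(s) ≤ Q_i^max(s) for all i ∈ ⟦1,k⟧ and s ∈ ⟦T0,T1⟧. -/
open MeasureTheory Filter Topology ProbabilityTheory
open scoped ENNReal NNReal

/-- The maximal interlacing configuration: `Q_i^max(T0+s) = min (x_{i-s}) (y_i)`, with the
convention `x_m = +∞` for `m ≤ 0`, defined on all of `ℤ` by clamping `s` to `⟦0, T1-T0⟧`. -/
def Qmax (T0 T1 : ℤ) {k : ℕ} (x y : Fin k → ℤ) (i : Fin k) (t : ℤ) : ℤ :=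
  if max 0 (min (t - T0) (T1 - T0)) ≤ (i : ℤ) then
    min (x ⟨(i : ℕ) - (max 0 (min (t - T0) (T1 - T0))).toNat,
      Nat.lt_of_le_of_lt (Nat.sub_le _ _) i.isLt⟩) (y i)
  else y i

theorem le_Qmax_iff (T0 T1 : ℤ) {k : ℕ} (x y : Fin k → ℤ) (i : Fin k) (n : ℕ)
    (hn : T0 + n ≤ T1) (z : ℤ) :
    z ≤ Qmax T0 T1 x y i (T0 + n) ↔
      z ≤ y i ∧ ∀ j : Fin k, (j : ℕ) + n = i → z ≤ x j := by
  have h : max 0 (min (T0 + n - T0) (T1 - T0)) = (n : ℤ) := by omega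
  unfold Qmax
  simp only [h, Int.toNat_natCast]
  split_ifs with hi
  · rw [le_min_iff, and_comm]
    refine and_congr_right fun _ => ⟨fun hz j hj => ?_, fun hz => hz _ ?_⟩
    · refine le_of_le_of_eq hz (congrArg x (Fin.ext ?_))
      simp only
      omega
    · simp only
      omega
  · refine ⟨fun hz => ⟨hz, fun j hj => ?_⟩, fun hz => hz.1⟩
    omega

theorem incrPath_le_end {T0 T1 : ℤ} {L : ℤ → ℤ} (h : IncrPath T0 T1 L) (m : ℕ) :
    ∀ t : ℤ, T0 ≤ t → t + m = T1 → L t ≤ L T1 := by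
  induction m with
  | zero => intro t _ h2; have : t = T1 := by omega
            rw [this]
  | succ m ih =>
    intro t h1 h2
    push_cast at h2
    exact (h.1 t h1 (by omega)).trans (ih (t + 1) (by omega) (by omega))

theorem omegaInter_le_x {T0 T1 : ℤ} {k : ℕ} {x y : Fin k → ℤ} {f g : ℤ → EReal}
    {Q : Fin k → ℤ → ℤ} (hQ : Q ∈ OmegaInter T0 T1 x y f g) (n : ℕ) :
    ∀ i j : Fin k, T0 + n ≤ T1 → (j : ℕ) + n = i → Q i (T0 + n) ≤ x j := by
  obtain ⟨_, h2, _, h4⟩ := hQ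
  induction n with
  | zero =>
    intro i j _ hj
    have : j = i := Fin.ext (by omega)
    subst this
    simp [h2]
  | succ n ih =>
    intro i j hn hj
    push_cast at hn
    have hi := i.isLt
    have a := (h4 (T0 + (n + 1 : ℕ)) (by push_cast; omega) (by push_cast; omega)).2.1
      ⟨j + n, by omega⟩ i (by simp only; omega)
    have e : T0 + ((n + 1 : ℕ) : ℤ) - 1 = T0 + n := by push_cast; omega
    rw [e] at a
    exact a.trans (ih _ j (by omega) rfl)

theorem omegaInter_le_Qmax {T0 T1 : ℤ} {k : ℕ} {x y : Fin k → ℤ} {f g : ℤ → EReal}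
    {Q : Fin k → ℤ → ℤ} (hQ : Q ∈ OmegaInter T0 T1 x y f g) (i : Fin k) (s : ℤ)
    (h0 : T0 ≤ s) (h1 : s ≤ T1) : Q i s ≤ Qmax T0 T1 x y i s := by
  obtain ⟨n, rfl⟩ : ∃ n : ℕ, s = T0 + n := ⟨(s - T0).toNat, by omega⟩
  rw [le_Qmax_iff _ _ _ _ _ _ h1]
  refine ⟨?_, fun j hj => omegaInter_le_x hQ n i j h1 hj⟩
  rw [← hQ.2.2.1 i]
  exact incrPath_le_end (hQ.1 i) (T1 - (T0 + n)).toNat _ h0 (by omega)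

/-- (Maximal interlacing configuration; Step 1 of the proof of Lemma 2.6.) -/
theorem maximal_interlacing_configuration
    (k : ℕ) (T0 T1 : ℤ) (hT : T0 < T1) (x y : Fin k → ℤ)
    (hx : ∀ i j : Fin k, i ≤ j → x j ≤ x i) (hy : ∀ i j : Fin k, i ≤ j → y j ≤ y i)
    (g : ℤ → EReal) (hg : ∀ r : ℤ, T0 ≤ r → r ≤ T1 → g r ≠ ⊤)
    (hne : (OmegaInter T0 T1 x y (fun _ => (⊤ : EReal)) g).Nonempty) :
    Qmax T0 T1 x y ∈ OmegaInter T0 T1 x y (fun _ => (⊤ : EReal)) g ∧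
      ∀ Q ∈ OmegaInter T0 T1 x y (fun _ => (⊤ : EReal)) g,
        ∀ (i : Fin k) (s : ℤ), T0 ≤ s → s ≤ T1 → Q i s ≤ Qmax T0 T1 x y i s := by
  obtain ⟨P, hP⟩ := hne
  refine ⟨⟨fun i => ⟨?_, ?_, ?_⟩, fun i => ?_, fun i => ?_, ?_⟩,
    fun Q hQ i s h0 h1 => omegaInter_le_Qmax hQ i s h0 h1⟩
  · intro t h0 h1
    obtain ⟨n, rfl⟩ : ∃ n : ℕ, t = T0 + n := ⟨(t - T0).toNat, by omega⟩
    have e : T0 + (n : ℤ) + 1 = T0 + ((n + 1 : ℕ) : ℤ) := by push_cast; omega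
    rw [e, le_Qmax_iff _ _ _ _ _ _ (by omega)]
    obtain ⟨a, b⟩ := (le_Qmax_iff T0 T1 x y i n (by omega) _).1 le_rfl
    refine ⟨a, fun j hj => ?_⟩
    have hi := i.isLt
    exact (b ⟨j + 1, by omega⟩ (by simp only; omega)).trans
      (hx _ _ (Fin.le_def.2 (by simp only; omega)))
  · intro s hs
    have e : max 0 (min (s - T0) (T1 - T0)) = max 0 (min (T0 - T0) (T1 - T0)) := by omega
    simp only [Qmax, e]
  · intro s hs
    have e : max 0 (min (s - T0) (T1 - T0)) = max 0 (min (T1 - T0) (T1 - T0)) := by omega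
    simp only [Qmax, e]
  · apply le_antisymm
    · have := ((le_Qmax_iff T0 T1 x y i 0 (by simpa using hT.le) _).1 le_rfl).2 i (by omega)
      simpa using this
    · have := omegaInter_le_Qmax hP i T0 le_rfl hT.le
      rwa [hP.2.1 i] at this
  · apply le_antisymm
    · have e : T1 = T0 + ((T1 - T0).toNat : ℤ) := by omega
      have := ((le_Qmax_iff T0 T1 x y i (T1 - T0).toNat (by omega) _).1 le_rfl).1
      rwa [← e] at this
    · have := omegaInter_le_Qmax hP i T1 hT.le le_rfl
      rwa [hP.2.2.1 i] at this
  · intro r h0 h1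
    refine ⟨fun _ _ => le_top, fun i j hij => ?_, fun i hi => ?_⟩
    · obtain ⟨n, rfl⟩ : ∃ n : ℕ, r = T0 + ((n + 1 : ℕ) : ℤ) :=
        ⟨(r - T0 - 1).toNat, by push_cast; omega⟩
      have e : T0 + ((n + 1 : ℕ) : ℤ) - 1 = T0 + n := by push_cast; omega
      rw [e, le_Qmax_iff _ _ _ _ _ _ (by push_cast at h1; omega)]
      obtain ⟨a, b⟩ := (le_Qmax_iff T0 T1 x y j (n + 1) h1 _).1 le_rfl
      exact ⟨a.trans (hy _ _ (Fin.le_def.2 (by omega))), fun l hl => b l (by omega)⟩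
    · refine ((hP.2.2.2 r h0 h1).2.2 i hi).trans ?_
      exact EReal.coe_le_coe_iff.2 (Int.cast_le.2
        (omegaInter_le_Qmax hP i (r - 1) (by omega) (by omega)))
end

section
/- (Connectivity by single-site moves; Step 1 of the proof of Lemma 2.6.) Let k ∈ ℕ, T0 < T1 be integers, x⃗, y⃗ ∈ 𝔚_k, and g : ⟦T0,T1⟧ → [−∞,∞), with Ω_Inter(T0,T1,x⃗,y⃗,∞,g) ≠ ∅, and let Q_i^max(T0+s) = min(x_{i−s}, y_i) (convention x_m = +∞ for m ≤ 0) be the maximal configuration. Set A = (T1 − T0 + 1)·k. Then for every 𝔔 ∈ Ω_Inter(T0,T1,x⃗,y⃗,∞,g) there exists a sequence 𝔔^0, 𝔔^1, …, 𝔔^A of elements of Ω_Inter(T0,T1,x⃗,y⃗,∞,g) such that 𝔔^0 = 𝔔, 𝔔^A = 𝔔^max, and for each m ∈ ⟦0, A−1⟧ the configurations 𝔔^m and 𝔔^{m+1} differ in at most one coordinate, i.e. Q_i^m(s) ≠ Q_i^{m+1}(s) for at most one pair (i,s) ∈ ⟦1,k⟧ × ⟦T0,T1⟧. -/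
open MeasureTheory Filter Topology ProbabilityTheory
open scoped ENNReal NNReal

lemma Qmax_at (T0 T1 : ℤ) {k : ℕ} (x y : Fin k → ℤ) (i : Fin k) (s : ℕ) (hs : (s : ℤ) ≤ T1 - T0) :
    Qmax T0 T1 x y i (T0 + s) =
      if s ≤ (i : ℕ) then min (x ⟨(i : ℕ) - s, Nat.lt_of_le_of_lt (Nat.sub_le _ _) i.isLt⟩) (y i)
      else y i := by
  have h : max 0 (min (T0 + (s : ℤ) - T0) (T1 - T0)) = (s : ℤ) := by omega
  unfold Qmax
  simp only [h, Int.toNat_natCast, Nat.cast_le]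

lemma path_le_end {T0 T1 : ℤ} {L : ℤ → ℤ} (h : IncrPath T0 T1 L) (n : ℕ) :
    ∀ t, T0 ≤ t → t + n = T1 → L t ≤ L T1 := by
  induction n with
  | zero => intro t _ h2; simp at h2; simp [h2]
  | succ n ih =>
    intro t h1 h2
    push_cast at h2
    exact (h.1 t h1 (by omega)).trans (ih (t + 1) (by omega) (by omega))

lemma omega_le_x {T0 T1 : ℤ} {k : ℕ} {x y : Fin k → ℤ} {f g : ℤ → EReal} {Q : Fin k → ℤ → ℤ}
    (hQ : Q ∈ OmegaInter T0 T1 x y f g) (s : ℕ) :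
    ∀ i : Fin k, (s : ℤ) ≤ T1 - T0 → s ≤ (i : ℕ) →
      Q i (T0 + s) ≤ x ⟨(i : ℕ) - s, Nat.lt_of_le_of_lt (Nat.sub_le _ _) i.isLt⟩ := by
  induction s with
  | zero => intro i _ _; simp [hQ.2.1 i]
  | succ s ih =>
    intro i h1 h2
    push_cast at h1
    have hi := i.isLt
    have a := (hQ.2.2.2 (T0 + s + 1) (by omega) (by omega)).2.1
      ⟨(i : ℕ) - 1, by omega⟩ i (by simp only; omega)
    have b := ih ⟨(i : ℕ) - 1, by omega⟩ (by omega) (by simp only; omega)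
    have e : T0 + (s : ℤ) + 1 - 1 = T0 + s := by ring
    rw [e] at a
    have e2 : T0 + ((s + 1 : ℕ) : ℤ) = T0 + s + 1 := by push_cast; ring
    rw [e2]
    refine (a.trans b).trans (le_of_eq ?_)
    congr 2
    simp only
    omega

lemma omega_le_Qmax {T0 T1 : ℤ} (hT : T0 < T1) {k : ℕ} {x y : Fin k → ℤ} {f g : ℤ → EReal}
    {Q : Fin k → ℤ → ℤ} (hQ : Q ∈ OmegaInter T0 T1 x y f g) (i : Fin k) (t : ℤ)
    (h1 : T0 ≤ t) (h2 : t ≤ T1) : Q i t ≤ Qmax T0 T1 x y i t := by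
  obtain ⟨s, hs⟩ := Int.eq_ofNat_of_zero_le (sub_nonneg.2 h1)
  obtain rfl : t = T0 + s := by omega
  have hy := path_le_end (hQ.1 i) (T1 - (T0 + s)).toNat (T0 + s) h1 (by omega)
  rw [hQ.2.2.1 i] at hy
  rw [Qmax_at _ _ _ _ _ _ (by omega)]
  split_ifs with h
  · exact le_min (omega_le_x hQ s i (by omega) h) hy
  · exact hy

lemma Qmax_le_y (T0 T1 : ℤ) {k : ℕ} (x y : Fin k → ℤ) (i : Fin k) (t : ℤ) :
    Qmax T0 T1 x y i t ≤ y i := by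
  unfold Qmax
  split_ifs
  · exact min_le_right _ _
  · exact le_rfl

lemma Qmax_mem {T0 T1 : ℤ} (hT : T0 < T1) {k : ℕ} {x y : Fin k → ℤ}
    (hx : ∀ i j : Fin k, i ≤ j → x j ≤ x i) (hy : ∀ i j : Fin k, i ≤ j → y j ≤ y i)
    {g : ℤ → EReal} {Q : Fin k → ℤ → ℤ} (hQ : Q ∈ OmegaInter T0 T1 x y (fun _ => (⊤ : EReal)) g) :
    Qmax T0 T1 x y ∈ OmegaInter T0 T1 x y (fun _ => (⊤ : EReal)) g := by
  refine ⟨fun i => ⟨?_, ?_, ?_⟩, ?_, ?_, ?_⟩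
  · intro t h1 h2
    obtain ⟨s, hs⟩ := Int.eq_ofNat_of_zero_le (sub_nonneg.2 h1)
    obtain rfl : t = T0 + s := by omega
    have e : T0 + (s : ℤ) + 1 = T0 + ((s + 1 : ℕ) : ℤ) := by push_cast; ring
    by_cases h : s + 1 ≤ (i : ℕ)
    · rw [e, Qmax_at _ _ _ _ _ _ (by omega), Qmax_at _ _ _ _ _ _ (by omega), if_pos h,
        if_pos (by omega)]
      refine min_le_min (hx _ _ ?_) le_rfl
      simp only [Fin.mk_le_mk]
      omega
    · refine (Qmax_le_y _ _ _ _ _ _).trans (le_of_eq ?_)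
      rw [e, Qmax_at _ _ _ _ _ _ (by omega), if_neg h]
  · intro t ht
    have h : max 0 (min (t - T0) (T1 - T0)) = 0 := by omega
    have h' : max 0 (min (T0 - T0) (T1 - T0)) = 0 := by omega
    unfold Qmax
    simp only [h, h']
  · intro t ht
    have h : max 0 (min (t - T0) (T1 - T0)) = T1 - T0 := by omega
    have h' : max 0 (min (T1 - T0) (T1 - T0)) = T1 - T0 := by omega
    unfold Qmax
    simp only [h, h']
  · intro i
    apply le_antisymm
    · have := Qmax_at T0 T1 x y i 0 (by push_cast; omega)
      simp at this
      rw [this]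
      exact min_le_left _ _
    · rw [← hQ.2.1 i]
      exact omega_le_Qmax hT hQ i T0 le_rfl hT.le
  · intro i
    apply le_antisymm (Qmax_le_y _ _ _ _ _ _)
    have := omega_le_Qmax hT hQ i T1 hT.le le_rfl
    rwa [hQ.2.2.1 i] at this
  · intro r h1 h2
    refine ⟨fun i _ => le_top, ?_, ?_⟩
    · intro i j hij
      obtain ⟨s, hs⟩ := Int.eq_ofNat_of_zero_le (show 0 ≤ r - 1 - T0 by omega)
      obtain rfl : r = T0 + ((s + 1 : ℕ) : ℤ) := by push_cast; omega
      have e : T0 + ((s + 1 : ℕ) : ℤ) - 1 = T0 + s := by push_cast; ring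
      have hyij : y j ≤ y i := hy i j (by rw [Fin.le_def]; omega)
      rw [e, Qmax_at _ _ _ _ _ _ (by omega), Qmax_at _ _ _ _ _ _ (by omega)]
      by_cases h : s ≤ (i : ℕ)
      · rw [if_pos h, if_pos (by omega)]
        refine min_le_min (hx _ _ ?_) hyij
        simp only [Fin.mk_le_mk]
        omega
      · rw [if_neg h, if_neg (by omega)]
        exact hyij
    · intro i hi
      refine ((hQ.2.2.2 r h1 h2).2.2 i hi).trans ?_
      have := omega_le_Qmax hT hQ i (r - 1) (by omega) (by omega)
      exact_mod_cast this

/-- The position of a site in the order in which sites are raised to their maximal value. -/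
def siteRank (T0 T1 : ℤ) (i t : ℤ) : ℤ :=
  i * (T1 - T0 + 1) + (T1 - max T0 (min t T1))

lemma mix_mem {T0 T1 : ℤ} (hT : T0 < T1) {k : ℕ} {x y : Fin k → ℤ} {g : ℤ → EReal}
    {Q M : Fin k → ℤ → ℤ} (hQ : Q ∈ OmegaInter T0 T1 x y (fun _ => (⊤ : EReal)) g)
    (hM : M ∈ OmegaInter T0 T1 x y (fun _ => (⊤ : EReal)) g)
    (hle : ∀ i t, T0 ≤ t → t ≤ T1 → Q i t ≤ M i t) (m : ℤ) :
    (fun (i : Fin k) (t : ℤ) => if siteRank T0 T1 ((i : ℕ) : ℤ) t < m then M i t else Q i t) ∈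
      OmegaInter T0 T1 x y (fun _ => (⊤ : EReal)) g := by
  have key : ∀ (i j : Fin k) (s t : ℤ), T0 ≤ s → s ≤ T1 → 
      siteRank T0 T1 ((j : ℕ) : ℤ) t ≤ siteRank T0 T1 ((i : ℕ) : ℤ) s →
      T0 ≤ t → t ≤ T1 → Q i s ≤ Q j t → M i s ≤ M j t →
      (if siteRank T0 T1 ((i : ℕ) : ℤ) s < m then M i s else Q i s) ≤
      (if siteRank T0 T1 ((j : ℕ) : ℤ) t < m then M j t else Q j t) := by
    intro i j s t hs1 hs2 hr ht1 ht2 h1 h2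
    have := hle j t ht1 ht2
    split_ifs <;> omega
  refine ⟨fun i => ⟨?_, ?_, ?_⟩, ?_, ?_, ?_⟩
  · intro t h1 h2
    refine key i i t (t + 1) h1 h2.le ?_ (by omega) (by omega) ((hQ.1 i).1 t h1 h2)
      ((hM.1 i).1 t h1 h2)
    unfold siteRank
    omega
  · intro t ht
    have e : siteRank T0 T1 ((i : ℕ) : ℤ) t = siteRank T0 T1 ((i : ℕ) : ℤ) T0 := by
      unfold siteRank; omega
    simp only [e, (hQ.1 i).2.1 t ht, (hM.1 i).2.1 t ht]
  · intro t ht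
    have e : siteRank T0 T1 ((i : ℕ) : ℤ) t = siteRank T0 T1 ((i : ℕ) : ℤ) T1 := by
      unfold siteRank; omega
    simp only [e, (hQ.1 i).2.2 t ht, (hM.1 i).2.2 t ht]
  · intro i
    simp only [hQ.2.1 i, hM.2.1 i, ite_self]
  · intro i
    simp only [hQ.2.2.1 i, hM.2.2.1 i, ite_self]
  · intro r h1 h2
    refine ⟨fun i _ => le_top, ?_, ?_⟩
    · intro i j hij
      refine key j i r (r - 1) (by omega) h2 ?_ (by omega) (by omega)
        ((hQ.2.2.2 r h1 h2).2.1 i j hij) ((hM.2.2.2 r h1 h2).2.1 i j hij)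
      unfold siteRank
      rw [hij]
      push_cast
      rw [add_mul, one_mul]
      omega
    · intro i hi
      simp only
      split_ifs
      · exact (hM.2.2.2 r h1 h2).2.2 i hi
      · exact (hQ.2.2.2 r h1 h2).2.2 i hi

/-- (Connectivity by single-site moves; Step 1 of the proof of Lemma 2.6.) Every element of
`Ω_Inter(T0,T1,x⃗,y⃗,∞,g)` is connected to the maximal configuration by `A = (T1-T0+1)·k`
moves, each changing the configuration in at most one coordinate `(i,s)`. -/
theorem connectivity_single_site_moves
    (k : ℕ) (T0 T1 : ℤ) (hT : T0 < T1) (x y : Fin k → ℤ)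
    (hx : ∀ i j : Fin k, i ≤ j → x j ≤ x i) (hy : ∀ i j : Fin k, i ≤ j → y j ≤ y i)
    (g : ℤ → EReal) (hg : ∀ r : ℤ, T0 ≤ r → r ≤ T1 → g r ≠ ⊤)
    (hne : (OmegaInter T0 T1 x y (fun _ => (⊤ : EReal)) g).Nonempty)
    (Q : Fin k → ℤ → ℤ) (hQ : Q ∈ OmegaInter T0 T1 x y (fun _ => (⊤ : EReal)) g) :
    ∃ c : ℕ → (Fin k → ℤ → ℤ),
      c 0 = Q ∧ c ((T1 - T0 + 1).toNat * k) = Qmax T0 T1 x y ∧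
      (∀ m ≤ (T1 - T0 + 1).toNat * k,
        c m ∈ OmegaInter T0 T1 x y (fun _ => (⊤ : EReal)) g) ∧
      ∀ m < (T1 - T0 + 1).toNat * k, ∀ (i1 i2 : Fin k) (s1 s2 : ℤ),
        T0 ≤ s1 → s1 ≤ T1 → T0 ≤ s2 → s2 ≤ T1 →
        c m i1 s1 ≠ c (m + 1) i1 s1 → c m i2 s2 ≠ c (m + 1) i2 s2 →
        i1 = i2 ∧ s1 = s2 := by
  have hM := Qmax_mem hT hx hy hQ
  have hNk : (((T1 - T0 + 1).toNat * k : ℕ) : ℤ) = k * (T1 - T0 + 1) := by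
    push_cast
    rw [Int.toNat_of_nonneg (by omega), mul_comm]
  refine ⟨fun (m : ℕ) (i : Fin k) (t : ℤ) => if siteRank T0 T1 ((i : ℕ) : ℤ) t < (m : ℤ) then Qmax T0 T1 x y i t
    else Q i t, ?_, ?_, ?_, ?_⟩
  · funext i t
    refine if_neg ?_
    have : 0 ≤ ((i : ℕ) : ℤ) * (T1 - T0 + 1) := mul_nonneg (by omega) (by omega)
    unfold siteRank
    push_cast
    omega
  · funext i t
    refine if_pos ?_
    rw [hNk]
    have hi := i.isLt
    have : (((i : ℕ) : ℤ) + 1) * (T1 - T0 + 1) ≤ k * (T1 - T0 + 1) :=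
      mul_le_mul_of_nonneg_right (by omega) (by omega)
    rw [add_mul, one_mul] at this
    unfold siteRank
    omega
  · intro m _
    exact mix_mem hT hQ hM (omega_le_Qmax hT hQ) m
  · intro m _ i1 i2 s1 s2 a1 b1 a2 b2 d1 d2
    have r : ∀ (i : Fin k) (s : ℤ),
        (if siteRank T0 T1 ((i : ℕ) : ℤ) s < (m : ℤ) then Qmax T0 T1 x y i s else Q i s) ≠
        (if siteRank T0 T1 ((i : ℕ) : ℤ) s < ((m + 1 : ℕ) : ℤ) then Qmax T0 T1 x y i s
          else Q i s) → siteRank T0 T1 ((i : ℕ) : ℤ) s = m := by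
      intro i s h
      by_contra hne
      apply h
      by_cases hl : siteRank T0 T1 ((i : ℕ) : ℤ) s < (m : ℤ)
      · rw [if_pos hl, if_pos (by push_cast; omega)]
      · rw [if_neg hl, if_neg (by push_cast; omega)]
    have e1 := r i1 s1 d1
    have e2 := r i2 s2 d2
    have c1 : max T0 (min s1 T1) = s1 := by omega
    have c2 : max T0 (min s2 T1) = s2 := by omega
    unfold siteRank at e1 e2
    rw [c1] at e1
    rw [c2] at e2
    have hi : (i1 : ℕ) = (i2 : ℕ) := by
      rcases lt_trichotomy (i1 : ℕ) (i2 : ℕ) with h | h | h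
      · have : (((i1 : ℕ) : ℤ) + 1) * (T1 - T0 + 1) ≤ ((i2 : ℕ) : ℤ) * (T1 - T0 + 1) :=
          mul_le_mul_of_nonneg_right (by omega) (by omega)
        rw [add_mul, one_mul] at this
        omega
      · exact h
      · have : (((i2 : ℕ) : ℤ) + 1) * (T1 - T0 + 1) ≤ ((i1 : ℕ) : ℤ) * (T1 - T0 + 1) :=
          mul_le_mul_of_nonneg_right (by omega) (by omega)
        rw [add_mul, one_mul] at this
        omega
    refine ⟨Fin.ext hi, ?_⟩
    rw [hi] at e1
    omega
end
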